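/- arXiv:2010.09502 — 2 statements merged into one kernel-verified Lean document; each statement's English description precedes it below -/
import Mathlib

section
/- For every x > 0 and every n ∈ ℕ, n ≥ 1, the integral ∫₀^∞ cos(nt) · H₀(2x·cosh t) dt converges absolutely and Re[J_{in/2}(x)²] / cosh(πn/2) = (2/π) · ∫₀^∞ cos(nt) · H₀(2x·cosh t) dt. -/
open MeasureTheory Filter Topology

/-- Bessel function of the first kind of complex order `ν` at real `x > 0`. -/
noncomputable def besselJ (ν : ℂ) (x : ℝ) : ℂ :=
  ∑' k : ℕ, ((-1 : ℂ) ^ k * Complex.exp ((ν + 2 * k) * (Real.log (x / 2) : ℂ))) /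
    ((Nat.factorial k : ℂ) * Complex.Gamma (ν + k + 1))

/-- Bessel function of the second kind of complex order `ν` at real `x > 0`. -/
noncomputable def besselY (ν : ℂ) (x : ℝ) : ℂ :=
  (besselJ ν x * Complex.cos (Real.pi * ν) - besselJ (-ν) x) / Complex.sin (Real.pi * ν)

/-- Bessel function of the first kind of order `0` (real-valued). -/
noncomputable def besselJ0 (x : ℝ) : ℝ :=
  ∑' k : ℕ, (-1 : ℝ) ^ k * (x / 2) ^ (2 * k) / (Nat.factorial k : ℝ) ^ 2

/-- Lommel function `S_{-1,0}` for `x > 0`. -/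
noncomputable def lommelS (x : ℝ) : ℝ :=
  ∫ t in Set.Ioi (0 : ℝ), t * Real.exp (-x * Real.sinh t)

/-- Struve function `K₀` for `x > 0`. -/
noncomputable def struveK0 (x : ℝ) : ℝ :=
  (2 / Real.pi) * ∫ t in Set.Ioi (0 : ℝ), Real.exp (-x * Real.sinh t)

/-- Bessel function of the second kind of order `0` (real-valued, for `x > 0`). -/
noncomputable def besselY0 (x : ℝ) : ℝ :=
  (2 / Real.pi) * ((Real.log (x / 2) + Real.eulerMascheroniConstant) * besselJ0 x +
    ∑' k : ℕ, (-1 : ℝ) ^ k * ((harmonic (k + 1) : ℚ) : ℝ) * (x / 2) ^ (2 * (k + 1)) /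
      (Nat.factorial (k + 1) : ℝ) ^ 2)

/-- Struve function `H₀`: `H₀ = K₀ˢ + Y₀`. -/
noncomputable def struveH0 (x : ℝ) : ℝ := struveK0 x + besselY0 x

/-!
The Mellin-type integral `∫₀^∞ cos (τ t) e^{-2 q cosh t} dt` equals
`π / (2 sin (π τ i)) * (I_{-iτ}(2 q) - I_{iτ}(2 q))` for `0 < Re q`. Put `q = z cos θ` and integrate
over `θ ∈ (0, π / 2)`. On the right, Neumann's formula turns `∫ I_ν(2 z cos θ) dθ` into
`(π / 2) I_{ν / 2}(z) ^ 2`. On the left, Fubini produces the Laplace transform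
`∫₀^{π / 2} e^{-w cos θ} dθ` at `w = 2 z cosh t`, which an integration by parts bounds by a multiple
of `‖w‖ ^ (-1 / 2)` in the closed right half plane. The identity therefore extends to the boundary
point `z = -i x`, where the imaginary part of the Laplace transform is `(π / 2) H₀(2 x cosh t)` and
`I_{iτ/2}(z)` is `e^{π τ / 4} J_{iτ/2}(x)`.

Both the first integral and `K₀ˢ` are evaluated by cutting Euler's integral at `1`: the regularised
sum of the two incomplete gamma functions is `q ^ (-a) * Γ(a)` away from the poles, and at a pole
its value carries the logarithm and the harmonic numbers of `Y₀`.
-/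

section

open Set Complex
open scoped Real Nat ComplexConjugate

lemma exists_norm_inv_add_intCast_le (a : ℂ) : ∃ C : ℝ, ∀ j : ℤ, ‖(a + j)⁻¹‖ ≤ C := by
  have hnorm : Tendsto (fun j : ℤ => ‖a + j‖) cofinite atTop := by
    have habs : Tendsto (fun j : ℤ => ‖(j : ℝ)‖) cofinite atTop :=
      (tendsto_norm_cocompact_atTop (E := ℝ)).comp Int.tendsto_coe_cofinite
    refine tendsto_atTop_mono (fun j => ?_) (tendsto_atTop_add_const_right _ (-‖a‖) habs)
    have := norm_sub_le (a + j) a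
    rw [add_sub_cancel_left, norm_intCast, ← Real.norm_eq_abs] at this
    linarith
  have hlim : Tendsto (fun j : ℤ => ‖(a + j)⁻¹‖) cofinite (𝓝 0) := by
    simpa only [norm_inv, Function.comp_def] using tendsto_inv_atTop_zero.comp hnorm
  obtain ⟨C, hC⟩ := hlim.bddAbove_range_of_cofinite
  exact ⟨C, fun j => hC ⟨j, rfl⟩⟩

lemma hasSum_pow_div_factorial (q : ℂ) : HasSum (fun m : ℕ => q ^ m / m !) (cexp q) := by
  rw [exp_eq_exp_ℂ]
  exact NormedSpace.expSeries_div_hasSum_exp q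

lemma summable_norm_pow_div_factorial (q : ℂ) : Summable fun m : ℕ => ‖q ^ m / (m ! : ℂ)‖ := by
  simpa only [norm_div, norm_pow, norm_natCast] using Real.summable_pow_div_factorial ‖q‖

/-- The normalised upper incomplete gamma function `q ^ (-a) * Γ(a, q)`, in the logarithmic
variable `t = log (u / q)` of Euler's integral. -/
noncomputable def scaledUpperGamma (a q : ℂ) : ℂ :=
  ∫ t in Ioi (0 : ℝ), cexp (a * t - q * Real.exp t)

/-- The series of the normalised lower incomplete gamma function `q ^ (-a) * γ(a, q)`. At a pole
`a = -k` the term `m = k` is a division by zero, hence `0`: the value there is the sum of the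
regular terms. -/
noncomputable def scaledLowerGamma (a q : ℂ) : ℂ :=
  ∑' m : ℕ, (-q) ^ m / m ! / (a + m)

lemma summable_scaledLowerGamma (a q : ℂ) :
    Summable fun m : ℕ => (-q) ^ m / m ! / (a + m) := by
  obtain ⟨C, hC⟩ := exists_norm_inv_add_intCast_le a
  refine ((summable_norm_pow_div_factorial (-q)).mul_right C).of_norm_bounded fun m => ?_
  rw [div_eq_mul_inv, norm_mul]
  gcongr
  exact mod_cast hC m

lemma norm_exp_mul_sub_mul_exp (a q : ℂ) (t : ℝ) :
    ‖cexp (a * t - q * Real.exp t)‖ = Real.exp (a.re * t - q.re * Real.exp t) := by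
  simp only [norm_exp, sub_re, re_mul_ofReal]

lemma exists_norm_exp_mul_sub_mul_exp_le (a : ℂ) {q : ℂ} (hq : 0 < q.re) :
    ∃ C : ℝ, ∀ t : ℝ, 0 ≤ t → ‖cexp (a * t - q * Real.exp t)‖ ≤ C * Real.exp (-t) := by
  refine ⟨Real.exp ((a.re + 1) ^ 2 / (2 * q.re)), fun t ht => ?_⟩
  rw [norm_exp_mul_sub_mul_exp, ← Real.exp_add, Real.exp_le_exp]
  have hsq : (a.re + 1) * t - q.re * (t ^ 2 / 2) ≤ (a.re + 1) ^ 2 / (2 * q.re) := by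
    rw [le_div_iff₀ (by positivity)]
    nlinarith [sq_nonneg ((a.re + 1) - q.re * t)]
  nlinarith [mul_le_mul_of_nonneg_left (Real.quadratic_le_exp_of_nonneg ht) hq.le]

lemma integrableOn_exp_mul_sub_mul_exp (a : ℂ) {q : ℂ} (hq : 0 < q.re) :
    IntegrableOn (fun t : ℝ => cexp (a * t - q * Real.exp t)) (Ioi 0) := by
  obtain ⟨C, hC⟩ := exists_norm_exp_mul_sub_mul_exp_le a hq
  refine Integrable.mono' ((integrableOn_exp_neg_Ioi 0).const_mul C)
    (by fun_prop : Continuous _).aestronglyMeasurable ?_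
  exact (ae_restrict_iff' measurableSet_Ioi).2 (ae_of_all _ fun t ht => hC t (le_of_lt ht))

lemma integrableOn_rexp_mul_sub_mul_exp (a : ℝ) {q : ℝ} (hq : 0 < q) :
    IntegrableOn (fun t : ℝ => Real.exp (a * t - q * Real.exp t)) (Ioi 0) := by
  refine (integrableOn_exp_mul_sub_mul_exp a (q := q) hq).norm.congr (ae_of_all _ fun t => ?_)
  simp only [norm_exp_mul_sub_mul_exp, ofReal_re]

lemma mul_scaledUpperGamma_add_one (a : ℂ) {q : ℂ} (hq : 0 < q.re) :
    q * scaledUpperGamma (a + 1) q = cexp (-q) + a * scaledUpperGamma a q := by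
  have hderiv : ∀ t ∈ Ici (0 : ℝ), HasDerivAt (fun t : ℝ => cexp (a * t - q * Real.exp t))
      (a * cexp (a * t - q * Real.exp t) - q * cexp ((a + 1) * t - q * Real.exp t)) t := by
    intro t _
    have hexponent : HasDerivAt (fun t : ℝ => (a * t - q * Real.exp t : ℂ))
        (a * 1 - q * (Real.exp t : ℝ)) t :=
      ((ofRealCLM.hasDerivAt (x := t)).const_mul a).sub
        ((Real.hasDerivAt_exp t).ofReal_comp.const_mul q)
    refine hexponent.cexp.congr_deriv ?_
    rw [show (a + 1) * t - q * Real.exp t = (a * t - q * Real.exp t) + t by ring, exp_add _ (t : ℂ),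
      ← ofReal_exp]
    ring
  have hlim : Tendsto (fun t : ℝ => cexp (a * t - q * Real.exp t)) atTop (𝓝 0) := by
    obtain ⟨C, hC⟩ := exists_norm_exp_mul_sub_mul_exp_le a hq
    refine squeeze_zero_norm' (a := fun t => C * Real.exp (-t)) ?_ ?_
    · filter_upwards [eventually_ge_atTop 0] with t ht using hC t ht
    · simpa using Real.tendsto_exp_neg_atTop_nhds_zero.const_mul C
  have hint := (integrableOn_exp_mul_sub_mul_exp a hq).const_mul a
  have hint' := (integrableOn_exp_mul_sub_mul_exp (a + 1) hq).const_mul q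
  have hftc := integral_Ioi_of_hasDerivAt_of_tendsto' hderiv (hint.sub hint') hlim
  rw [integral_sub hint hint', integral_const_mul, integral_const_mul] at hftc
  simp only [ofReal_zero, mul_zero, Real.exp_zero, ofReal_one, mul_one, zero_sub] at hftc
  unfold scaledUpperGamma
  linear_combination -hftc

lemma hasSum_mul_scaledLowerGamma_term (a q : ℂ) :
    HasSum (fun m : ℕ => m * ((-q) ^ m / m ! / (a + m))) (-q * scaledLowerGamma (a + 1) q) := by
  rw [← hasSum_nat_add_iff' 1]
  simp only [Finset.range_one, Finset.sum_singleton, Nat.cast_zero, zero_mul, sub_zero]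
  refine ((summable_scaledLowerGamma (a + 1) q).hasSum.mul_left (-q)).congr_fun fun m => ?_
  rw [Nat.factorial_succ, show a + 1 + (m : ℂ) = a + (m + 1) by ring]
  push_cast
  field_simp
  ring

lemma mul_scaledLowerGamma_add_one {a : ℂ} (ha : ∀ m : ℕ, a ≠ -m) (q : ℂ) :
    q * scaledLowerGamma (a + 1) q = a * scaledLowerGamma a q - cexp (-q) := by
  have hleft := ((summable_scaledLowerGamma a q).hasSum.mul_left a).sub
    (hasSum_pow_div_factorial (-q))
  have hright := (hasSum_mul_scaledLowerGamma_term a q).neg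
  rw [neg_mul, neg_neg] at hright
  refine hright.unique (hleft.congr_fun fun m => ?_)
  have : a + m ≠ 0 := fun h => ha m (eq_neg_of_add_eq_zero_left h)
  field_simp
  ring

lemma hasDerivAt_scaledUpperGamma (a : ℂ) {q : ℂ} (hq : 0 < q.re) :
    HasDerivAt (scaledUpperGamma a) (-scaledUpperGamma (a + 1) q) q := by
  have hderiv := (hasDerivAt_integral_of_dominated_loc_of_deriv_le (𝕜 := ℂ)
    (μ := volume.restrict (Ioi (0 : ℝ)))
    (F := fun q (t : ℝ) => cexp (a * t - q * Real.exp t))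
    (F' := fun q (t : ℝ) => -cexp ((a + 1) * t - q * Real.exp t))
    (bound := fun t => Real.exp ((a + 1).re * t - q.re / 2 * Real.exp t))
    (Metric.ball_mem_nhds q (half_pos hq))
    (Eventually.of_forall fun q => (by fun_prop : Continuous _).aestronglyMeasurable)
    (integrableOn_exp_mul_sub_mul_exp a hq)
    (by fun_prop : Continuous _).aestronglyMeasurable
    (ae_of_all _ fun t w hw => ?_) (integrableOn_rexp_mul_sub_mul_exp _ (half_pos hq))
    (ae_of_all _ fun t w _ => ?_)).2
  · rwa [integral_neg] at hderiv
  · rw [norm_neg, norm_exp_mul_sub_mul_exp]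
    have hre : |(w - q).re| < q.re / 2 := (abs_re_le_norm _).trans_lt (mem_ball_iff_norm.1 hw)
    rw [sub_re] at hre
    gcongr
    linarith [(abs_lt.1 hre).1]
  · have hexponent : HasDerivAt (fun q : ℂ => a * t - q * Real.exp t) (-(1 * Real.exp t)) w :=
      ((hasDerivAt_id w).mul_const _).const_sub _
    refine hexponent.cexp.congr_deriv ?_
    rw [show (a + 1) * t - w * Real.exp t = (a * t - w * Real.exp t) + t by ring, exp_add _ (t : ℂ),
      ← ofReal_exp]
    ring

lemma hasDerivAt_scaledLowerGamma (a q : ℂ) :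
    HasDerivAt (scaledLowerGamma a) (-scaledLowerGamma (a + 1) q) q := by
  obtain ⟨C, hC⟩ := exists_norm_inv_add_intCast_le a
  have hterm (m : ℕ) (w : ℂ) : HasDerivAt (fun w : ℂ => (-w) ^ m / m ! / (a + m))
      (m * (-w) ^ (m - 1) * -1 / m ! / (a + m)) w :=
    (((hasDerivAt_id w).neg.pow m).div_const _).div_const _
  have hsum : Summable fun m : ℕ => (‖q‖ + 1) ^ m / m ! * C :=
    (Real.summable_pow_div_factorial _).mul_right C
  have hbound (m : ℕ) (w : ℂ) (hw : w ∈ Metric.ball (0 : ℂ) (‖q‖ + 1)) :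
      ‖(-w) ^ m / m ! / (a + m)‖ ≤ (‖q‖ + 1) ^ m / m ! * C := by
    rw [div_eq_mul_inv _ (a + m), norm_mul, norm_div, norm_pow, norm_neg, norm_natCast]
    gcongr
    · exact (mem_ball_zero_iff.1 hw).le
    · exact mod_cast hC m
  have hdiff (m : ℕ) : DifferentiableOn ℂ (fun w : ℂ => (-w) ^ m / m ! / (a + m))
      (Metric.ball (0 : ℂ) (‖q‖ + 1)) :=
    fun w _ => (hterm m w).differentiableAt.differentiableWithinAt
  have hq : q ∈ Metric.ball (0 : ℂ) (‖q‖ + 1) := by simp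
  have hderiv := hasSum_deriv_of_summable_norm hsum hdiff Metric.isOpen_ball hbound hq
  rw [← hasSum_nat_add_iff' 1] at hderiv
  simp only [(hterm _ _).deriv, Finset.range_one, Finset.sum_singleton,
    Nat.cast_zero, zero_mul, zero_div, sub_zero] at hderiv
  have hshift := (summable_scaledLowerGamma (a + 1) q).hasSum.neg
  have hval := hderiv.unique (hshift.congr_fun fun m => by
    rw [Nat.factorial_succ, show a + 1 + (m : ℂ) = a + (m + 1) by ring]
    push_cast
    field_simp)
  have hdat := (differentiableOn_tsum_of_summable_norm hsum hdiff Metric.isOpen_ball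
    hbound).differentiableAt (Metric.isOpen_ball.mem_nhds hq) |>.hasDerivAt
  rw [hval] at hdat
  exact hdat

lemma scaledLowerGamma_one_eq_integral {a : ℂ} (ha : 0 < a.re) :
    scaledLowerGamma a 1 = ∫ u in (0 : ℝ)..1, (Real.exp (-u) : ℂ) * (u : ℂ) ^ (a - 1) := by
  have hint : IntervalIntegrable (fun u : ℝ => u ^ (a.re - 1)) volume 0 1 :=
    intervalIntegral.intervalIntegrable_rpow' (by linarith)
  have hsum := intervalIntegral.hasSum_integral_of_dominated_convergence (μ := volume)
    (a := (0 : ℝ)) (b := 1)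
    (F := fun (m : ℕ) (u : ℝ) => (-1) ^ m / (m ! : ℂ) * (u : ℂ) ^ (a + m - 1))
    (f := fun u : ℝ => (Real.exp (-u) : ℂ) * (u : ℂ) ^ (a - 1))
    (fun m u => 1 / m ! * u ^ (a.re - 1)) ?_ ?_ ?_ ?_ ?_
  · rw [scaledLowerGamma, ← hsum.tsum_eq]
    congr with m
    have hre : 0 < (a + m).re := by
      simpa using add_pos_of_pos_of_nonneg ha (m.cast_nonneg (α := ℝ))
    have hne : a + m ≠ 0 := fun h => hre.ne' (by rw [h, zero_re])
    rw [intervalIntegral.integral_const_mul, integral_cpow (Or.inl (by simpa using hre))]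
    simp [zero_cpow hne, div_eq_mul_inv]
  · exact fun m => (measurable_ofReal.pow_const _).const_mul _ |>.aestronglyMeasurable
  · refine fun m => ae_of_all _ fun u hu => ?_
    rw [uIoc_of_le zero_le_one] at hu
    rw [norm_mul, norm_div, norm_pow, norm_neg, norm_one, one_pow, norm_natCast,
      norm_cpow_eq_rpow_re_of_pos hu.1]
    gcongr ?_ * ?_
    refine Real.rpow_le_rpow_of_exponent_ge hu.1 hu.2 ?_
    simp
  · refine ae_of_all _ fun u _ => Summable.mul_right _ ?_
    simpa using Real.summable_pow_div_factorial 1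
  · simp_rw [tsum_mul_right]
    exact hint.const_mul _
  · refine ae_of_all _ fun u hu => ?_
    rw [uIoc_of_le zero_le_one] at hu
    have hu0 : (u : ℂ) ≠ 0 := ofReal_ne_zero.2 hu.1.ne'
    have hexp := (hasSum_pow_div_factorial (-(u : ℂ))).mul_right ((u : ℂ) ^ (a - 1))
    rw [← ofReal_neg, ← ofReal_exp] at hexp
    refine hexp.congr_fun fun m => ?_
    rw [show a + m - 1 = m + (a - 1) by ring, cpow_add _ _ hu0, cpow_natCast,
      ofReal_neg, neg_pow (u : ℂ)]
    ring

lemma scaledUpperGamma_one_eq_integral (a : ℂ) :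
    scaledUpperGamma a 1 = ∫ u in Ioi (1 : ℝ), (Real.exp (-u) : ℂ) * (u : ℂ) ^ (a - 1) := by
  rw [← Real.exp_zero, ← integral_comp_exp_Ioi, scaledUpperGamma]
  congr with t
  rw [real_smul, cpow_def_of_ne_zero (by simp), ← ofReal_log (Real.exp_pos t).le, Real.log_exp,
    ofReal_exp, ofReal_exp (-_), ← exp_add, ← exp_add]
  push_cast
  ring_nf

lemma scaledUpperGamma_one_add_scaledLowerGamma_one {a : ℂ} (ha : 0 < a.re) :
    scaledUpperGamma a 1 + scaledLowerGamma a 1 = Gamma a := by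
  have hint := GammaIntegral_convergent ha
  rw [Gamma_eq_integral ha, GammaIntegral, ← Ioc_union_Ioi_eq_Ioi zero_le_one,
    setIntegral_union Ioc_disjoint_Ioi_same measurableSet_Ioi
      (hint.mono_set Ioc_subset_Ioi_self) (hint.mono_set (Ioi_subset_Ioi zero_le_one)),
    ← intervalIntegral.integral_of_le zero_le_one, ← scaledLowerGamma_one_eq_integral ha,
    ← scaledUpperGamma_one_eq_integral, add_comm]

/-- The recurrences make `q ^ a * (U + L)` have zero derivative in `q`. -/
lemma exp_mul_log_mul_scaledUpperGamma_add_scaledLowerGamma {a q : ℂ} (ha : 0 < a.re)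
    (hq : 0 < q.re) :
    cexp (a * log q) * (scaledUpperGamma a q + scaledLowerGamma a q) = Gamma a := by
  have hderiv (z : ℂ) (hz : 0 < z.re) : HasDerivAt
      (fun z => cexp (a * log z) * (scaledUpperGamma a z + scaledLowerGamma a z)) 0 z := by
    have hz0 : z ≠ 0 := by rintro rfl; simp at hz
    refine (((hasDerivAt_log (Or.inl hz)).const_mul a).cexp.mul
      ((hasDerivAt_scaledUpperGamma a hz).add (hasDerivAt_scaledLowerGamma a z))).congr_deriv ?_
    have hU := mul_scaledUpperGamma_add_one a hz
    have hL := mul_scaledLowerGamma_add_one (a := a) (fun m h => by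
      have := congrArg re h; simp at this; have := m.cast_nonneg (α := ℝ); linarith) z
    simp only [Pi.add_apply]
    field_simp
    linear_combination -cexp (a * log z) * (hU + hL)
  have hconst := (isOpen_lt continuous_const continuous_re).is_const_of_deriv_eq_zero
    (convex_halfSpace_re_gt 0).isPreconnected
    (fun z hz => (hderiv z hz).differentiableAt.differentiableWithinAt)
    (fun z hz => (hderiv z hz).deriv) (x := q) (y := 1) hq (by simp)
  simpa [scaledUpperGamma_one_add_scaledLowerGamma_one ha] using hconst

lemma scaledUpperGamma_add_scaledLowerGamma {a q : ℂ} (ha : ∀ m : ℕ, a ≠ -m) (hq : 0 < q.re) :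
    scaledUpperGamma a q + scaledLowerGamma a q = cexp (-a * log q) * Gamma a := by
  obtain ⟨k, hk⟩ := exists_nat_gt (-a.re)
  induction k generalizing a with
  | zero =>
    rw [← exp_mul_log_mul_scaledUpperGamma_add_scaledLowerGamma (by simpa using hk) hq, ← mul_assoc,
      ← exp_add]
    simp
  | succ k ih =>
    have hq0 : q ≠ 0 := by rintro rfl; simp at hq
    have ha0 : a ≠ 0 := by simpa using ha 0
    have hnext := ih (a := a + 1)
      (fun m h => ha (m + 1) (by push_cast; linear_combination h))
      (by push_cast at hk; rw [add_re, one_re]; linarith)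
    have hexp : q * cexp (-(a + 1) * log q) = cexp (-a * log q) := by
      rw [show -(a + 1) * log q = -a * log q - log q by ring, exp_sub, exp_log hq0]
      field_simp
    rw [Gamma_add_one a ha0] at hnext
    apply mul_left_cancel₀ ha0
    linear_combination q * hnext + a * Gamma a * hexp - mul_scaledUpperGamma_add_one a hq
      - mul_scaledLowerGamma_add_one ha q

lemma continuous_scaledUpperGamma_left {q : ℂ} (hq : 0 < q.re) :
    Continuous fun a => scaledUpperGamma a q := by
  refine continuous_iff_continuousAt.2 fun a => ?_
  refine continuousAt_of_dominated (bound := fun t => Real.exp ((a.re + 1) * t - q.re * Real.exp t))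
    (Eventually.of_forall fun b => (by fun_prop : Continuous _).aestronglyMeasurable) ?_
    (integrableOn_rexp_mul_sub_mul_exp _ hq) (ae_of_all _ fun t => by fun_prop)
  filter_upwards [continuous_re.continuousAt.eventually (eventually_le_nhds (lt_add_one a.re))]
    with b hb
  refine (ae_restrict_iff' measurableSet_Ioi).2 (ae_of_all _ fun t ht => ?_)
  rw [norm_exp_mul_sub_mul_exp]
  gcongr
  exact le_of_lt ht

lemma tendsto_scaledLowerGamma_sub_inv (q : ℂ) :
    Tendsto (fun a => scaledLowerGamma a q - a⁻¹) (𝓝 0) (𝓝 (scaledLowerGamma 0 q)) := by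
  have hsplit (a : ℂ) : scaledLowerGamma a q - a⁻¹ =
      ∑' m : ℕ, (-q) ^ (m + 1) / (m + 1)! / (a + (m + 1 : ℕ)) := by
    rw [scaledLowerGamma, (summable_scaledLowerGamma a q).tsum_eq_zero_add]
    simp
  rw [← sub_zero (scaledLowerGamma 0 q)]
  nth_rewrite 3 [← inv_zero]
  simp_rw [hsplit]
  refine tendsto_tsum_of_dominated_convergence
    (bound := fun m => ‖(-q) ^ (m + 1) / ((m + 1)! : ℂ)‖ * 2)
    (((summable_nat_add_iff 1).2 (summable_norm_pow_div_factorial (-q))).mul_right 2)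
    (fun m => ?_) ?_
  · refine Tendsto.div tendsto_const_nhds (tendsto_id.add tendsto_const_nhds) ?_
    rw [zero_add]
    exact mod_cast m.succ_ne_zero
  · filter_upwards [Metric.ball_mem_nhds (0 : ℂ) one_half_pos] with a ha m
    have hle : 1 / 2 ≤ ‖a + (m + 1 : ℕ)‖ := by
      have htri := norm_sub_le (a + (m + 1 : ℕ)) a
      rw [add_sub_cancel_left, norm_natCast] at htri
      have := mem_ball_zero_iff.1 ha
      push_cast at htri ⊢
      linarith [m.cast_nonneg (α := ℝ)]
    rw [norm_div, div_eq_mul_inv]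
    gcongr
    exact inv_le_of_inv_le₀ two_pos (by simpa using hle)

lemma hasDerivAt_exp_neg_mul_mul_Gamma_add_one (l : ℂ) :
    HasDerivAt (fun a => cexp (-a * l) * Gamma (a + 1)) (-l - Real.eulerMascheroniConstant) 0 := by
  have hexp : HasDerivAt (fun a : ℂ => cexp (-a * l)) (cexp (-0 * l) * (-1 * l)) 0 :=
    ((hasDerivAt_id (0 : ℂ)).neg.mul_const l).cexp
  have hGamma : HasDerivAt (fun a => Gamma (a + 1)) (-Real.eulerMascheroniConstant : ℂ) 0 := by
    have := hasDerivAt_Gamma_one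
    rw [← zero_add 1] at this
    simpa using this.comp_add_const 0 1
  refine (hexp.mul hGamma).congr_deriv ?_
  simp [sub_eq_add_neg]

/-- Limit `a → 0` of the regular case: the poles `1 / a` of `q ^ (-a) * Γ(a)` and of the series
cancel, and Euler's constant is `-Γ'(1)`. -/
lemma scaledUpperGamma_zero_add_scaledLowerGamma_zero {q : ℂ} (hq : 0 < q.re) :
    scaledUpperGamma 0 q + scaledLowerGamma 0 q = -log q - Real.eulerMascheroniConstant := by
  have hslope := (hasDerivAt_iff_tendsto_slope_zero.1
    (hasDerivAt_exp_neg_mul_mul_Gamma_add_one (log q)))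
  have hU : Tendsto (fun a => scaledUpperGamma a q) (𝓝[≠] 0) (𝓝 (scaledUpperGamma 0 q)) :=
    ((continuous_scaledUpperGamma_left hq).tendsto 0).mono_left nhdsWithin_le_nhds
  have hL := (tendsto_scaledLowerGamma_sub_inv q).mono_left (nhdsWithin_le_nhds (s := {0}ᶜ))
  refine tendsto_nhds_unique_of_eventuallyEq (hU.add hL) hslope ?_
  filter_upwards [self_mem_nhdsWithin, nhdsWithin_le_nhds (Metric.ball_mem_nhds (0 : ℂ) one_pos)]
    with a ha0 ha
  have hpole (m : ℕ) : a ≠ -m := by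
    rintro rfl
    simp at ha ha0
    omega
  have hreg := scaledUpperGamma_add_scaledLowerGamma hpole hq
  simp only [zero_add, neg_zero, zero_mul, exp_zero, Gamma_one, one_mul, smul_eq_mul,
    Gamma_add_one a ha0]
  rw [neg_mul] at hreg ⊢
  have : a ≠ 0 := ha0
  field_simp
  linear_combination a * hreg

lemma mul_scaledLowerGamma_neg_succ (q : ℂ) (k : ℕ) :
    (k + 1) * scaledLowerGamma (-(k + 1 : ℕ)) q =
      -q * scaledLowerGamma (-k) q - cexp (-q) + (-q) ^ (k + 1) / (k + 1)! := by
  have hshift := hasSum_mul_scaledLowerGamma_term (-(k + 1 : ℕ)) q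
  rw [show -((k + 1 : ℕ) : ℂ) + 1 = -k by push_cast; ring] at hshift
  have hright := (hshift.sub (hasSum_pow_div_factorial (-q))).add
    (hasSum_ite_eq (k + 1) ((-q) ^ (k + 1) / (k + 1)! : ℂ))
  have hleft := (summable_scaledLowerGamma (-(k + 1 : ℕ)) q).hasSum.mul_left (k + 1 : ℂ)
  refine hleft.unique (hright.congr_fun fun m => ?_)
  rcases eq_or_ne m (k + 1) with rfl | hm
  · simp
  · have : -((k + 1 : ℕ) : ℂ) + m ≠ 0 := fun h =>
      hm (by exact_mod_cast (neg_add_eq_zero.1 h).symm)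
    rw [if_neg hm]
    field_simp
    push_cast
    ring

lemma scaledUpperGamma_neg_add_scaledLowerGamma_neg {q : ℂ} (hq : 0 < q.re) (k : ℕ) :
    scaledUpperGamma (-k) q + scaledLowerGamma (-k) q =
      (-q) ^ k / k ! * (-log q - Real.eulerMascheroniConstant + (harmonic k : ℚ)) := by
  induction k with
  | zero => simpa using scaledUpperGamma_zero_add_scaledLowerGamma_zero hq
  | succ k ih =>
    have hU := mul_scaledUpperGamma_add_one (-(k + 1 : ℕ)) hq
    rw [show -((k + 1 : ℕ) : ℂ) + 1 = -k by push_cast; ring] at hU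
    have hL := mul_scaledLowerGamma_neg_succ q k
    have hk : (k + 1 : ℂ) ≠ 0 := k.cast_add_one_ne_zero
    have hsum : (k + 1) * (scaledUpperGamma (-(k + 1 : ℕ)) q + scaledLowerGamma (-(k + 1 : ℕ)) q) =
        -q * (scaledUpperGamma (-k) q + scaledLowerGamma (-k) q) + (-q) ^ (k + 1) / (k + 1)! := by
      push_cast at hU hL ⊢
      linear_combination hL + hU
    rw [ih] at hsum
    apply mul_left_cancel₀ hk
    rw [hsum, harmonic_succ, Nat.factorial_succ]
    push_cast
    field_simp
    ring

lemma norm_exp_add_mul_exp_neg_le (a p q : ℂ) {t : ℝ} (ht : 0 ≤ t) :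
    ‖cexp (a * t - q * Real.exp t + p * Real.exp (-t))‖ ≤
      ‖cexp (a * t - q * Real.exp t)‖ * Real.exp ‖p‖ := by
  rw [exp_add, norm_mul]
  gcongr
  rw [norm_exp, Real.exp_le_exp, re_mul_ofReal]
  have hone : Real.exp (-t) ≤ 1 := Real.exp_le_one_iff.2 (neg_nonpos.2 ht)
  nlinarith [re_le_norm p, norm_nonneg p, Real.exp_pos (-t)]

lemma integrableOn_exp_add_mul_exp_neg (a p : ℂ) {q : ℂ} (hq : 0 < q.re) :
    IntegrableOn (fun t : ℝ => cexp (a * t - q * Real.exp t + p * Real.exp (-t))) (Ioi 0) :=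
  ((integrableOn_exp_mul_sub_mul_exp a hq).norm.mul_const (Real.exp ‖p‖)).mono'
    (by fun_prop : Continuous _).aestronglyMeasurable
    ((ae_restrict_iff' measurableSet_Ioi).2
      (ae_of_all _ fun _ ht => norm_exp_add_mul_exp_neg_le a p q (le_of_lt ht)))

lemma hasSum_scaledUpperGamma_sub (a p : ℂ) {q : ℂ} (hq : 0 < q.re) :
    HasSum (fun k : ℕ => p ^ k / k ! * scaledUpperGamma (a - k) q)
      (∫ t in Ioi (0 : ℝ), cexp (a * t - q * Real.exp t + p * Real.exp (-t))) := by
  have hsum := hasSum_integral_of_dominated_convergence (μ := volume.restrict (Ioi (0 : ℝ)))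
    (F := fun (k : ℕ) (t : ℝ) => p ^ k / (k ! : ℂ) * cexp ((a - k) * t - q * Real.exp t))
    (f := fun t : ℝ => cexp (a * t - q * Real.exp t + p * Real.exp (-t)))
    (fun k t => ‖p ^ k / (k ! : ℂ)‖ * ‖cexp (a * t - q * Real.exp t)‖) ?_ ?_ ?_ ?_ ?_
  · simp only [integral_const_mul] at hsum
    exact hsum
  · exact fun k => (by fun_prop : Continuous _).aestronglyMeasurable
  · refine fun k => (ae_restrict_iff' measurableSet_Ioi).2 (ae_of_all _ fun t ht => ?_)
    rw [norm_mul, norm_exp_mul_sub_mul_exp, norm_exp_mul_sub_mul_exp, sub_re, natCast_re]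
    have : 0 ≤ (k : ℝ) * t := mul_nonneg k.cast_nonneg (le_of_lt ht)
    gcongr ?_ * Real.exp ?_
    linarith
  · exact ae_of_all _ fun t => (summable_norm_pow_div_factorial p).mul_right _
  · simp_rw [tsum_mul_right]
    exact (integrableOn_exp_mul_sub_mul_exp a hq).norm.const_mul _
  · refine ae_of_all _ fun t => ?_
    rw [exp_add]
    refine ((hasSum_pow_div_factorial (p * Real.exp (-t))).mul_left _).congr_fun fun k => ?_
    rw [mul_pow, ofReal_exp (-t), ← exp_nat_mul, show (a - k) * t - q * Real.exp t =
      (a * t - q * Real.exp t) + k * ((-t : ℝ) : ℂ) by push_cast; ring, exp_add]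
    ring

/-- The general term of the double series obtained by expanding both exponentials of
`exp (a * t - q * exp t + p * exp (-t))` and integrating formally over `t < 0`. A term with
vanishing denominator is a division by zero, hence `0`. -/
noncomputable def gammaPairTerm (a p q : ℂ) (i : ℕ × ℕ) : ℂ :=
  p ^ i.1 / i.1 ! * ((-q) ^ i.2 / i.2 !) / (a - i.1 + i.2)

lemma summable_gammaPairTerm (a p q : ℂ) : Summable (gammaPairTerm a p q) := by
  obtain ⟨C, hC⟩ := exists_norm_inv_add_intCast_le a
  have hprod := (summable_norm_pow_div_factorial p).mul_norm (summable_norm_pow_div_factorial (-q))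
  refine (hprod.mul_right C).of_norm_bounded fun i => ?_
  rw [gammaPairTerm, div_eq_mul_inv, norm_mul]
  gcongr
  rw [sub_add_eq_add_sub, add_sub_assoc]
  exact mod_cast hC (i.2 - i.1)

lemma hasSum_scaledLowerGamma_sub (a p q : ℂ) :
    HasSum (fun k : ℕ => p ^ k / k ! * scaledLowerGamma (a - k) q)
      (∑' i, gammaPairTerm a p q i) := by
  refine (summable_gammaPairTerm a p q).hasSum.prod_fiberwise fun k => ?_
  refine ((summable_scaledLowerGamma (a - k) q).hasSum.mul_left (p ^ k / k !)).congr_fun fun m => ?_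
  rw [gammaPairTerm, mul_div_assoc]

lemma hasSum_scaledUpperGamma_add_scaledLowerGamma_sub (a p : ℂ) {q : ℂ} (hq : 0 < q.re) :
    HasSum (fun k : ℕ => p ^ k / k ! * (scaledUpperGamma (a - k) q + scaledLowerGamma (a - k) q))
      ((∫ t in Ioi (0 : ℝ), cexp (a * t - q * Real.exp t + p * Real.exp (-t))) +
        ∑' i, gammaPairTerm a p q i) := by
  simpa only [mul_add] using
    (hasSum_scaledUpperGamma_sub a p hq).add (hasSum_scaledLowerGamma_sub a p q)

lemma tsum_eq_zero_of_antisymm {f : ℕ × ℕ → ℂ} (hf : ∀ i, f i.swap = -f i) : ∑' i, f i = 0 := by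
  have hswap := (Equiv.prodComm ℕ ℕ).tsum_eq f
  simp only [Equiv.prodComm_apply, hf, tsum_neg] at hswap
  exact self_eq_neg.1 hswap.symm

/-- The modified Bessel function `I_ν(2 * exp l)`: in the logarithmic variable `l` it is entire, so
no branch of the power has to be chosen. -/
noncomputable def besselIExp (ν l : ℂ) : ℂ :=
  ∑' k : ℕ, cexp ((ν + 2 * k) * l) / (k ! * Gamma (ν + k + 1))

lemma Gamma_sub_natCast {ν : ℂ} (hν : ∀ n : ℤ, ν ≠ n) (k : ℕ) :
    Gamma (ν - k) = (-1) ^ k * (π / sin (π * ν)) / Gamma (-ν + k + 1) := by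
  have hrefl := Gamma_mul_Gamma_one_sub (ν - k)
  have hne : Gamma (-ν + k + 1) ≠ 0 := Gamma_ne_zero fun m h =>
    hν (m + k + 1) (by push_cast; linear_combination -h)
  rw [show 1 - (ν - k) = -ν + k + 1 by ring, mul_sub, mul_comm (π : ℂ) k,
    sin_antiperiodic.sub_nat_mul_eq] at hrefl
  rw [eq_div_iff hne, hrefl]
  rcases neg_one_pow_eq_or ℂ k with h | h <;> simp [h, div_neg]

lemma integral_exp_neg_mul_exp_add_mul_exp_neg {ν q : ℂ} (hν : ∀ n : ℤ, ν ≠ n) (hq : 0 < q.re) :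
    (∫ t in Ioi (0 : ℝ), cexp (ν * t - q * Real.exp t + -q * Real.exp (-t))) =
      π / sin (π * ν) * besselIExp (-ν) (log q) - ∑' i, gammaPairTerm ν (-q) q i := by
  have hq0 : q ≠ 0 := by rintro rfl; simp at hq
  have hsum := hasSum_scaledUpperGamma_add_scaledLowerGamma_sub ν (-q) hq
  rw [eq_sub_iff_add_eq, ← hsum.tsum_eq, besselIExp, ← tsum_mul_left]
  congr with k
  have hpole (m : ℕ) : ν - k ≠ -m := fun h =>
    hν (k - m) (by push_cast; linear_combination h)
  have hexp : cexp ((-ν + 2 * k) * log q) = q ^ k * cexp (-(ν - k) * log q) := by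
    rw [← exp_log hq0, ← exp_nat_mul, exp_log hq0, ← exp_add]
    ring_nf
  have hsign : (-q) ^ k * (-1) ^ k = q ^ k := by rw [← mul_pow]; simp
  rw [scaledUpperGamma_add_scaledLowerGamma hpole hq, Gamma_sub_natCast hν, hexp, ← hsign]
  ring

/-- Swapping the two summation indices makes the double series cancel between `ν` and `-ν`. -/
lemma integral_cosh_mul_exp_neg_mul_cosh {ν q : ℂ} (hν : ∀ n : ℤ, ν ≠ n) (hq : 0 < q.re) :
    ∫ t in Ioi (0 : ℝ), cosh (ν * t) * cexp (-(2 * q * Real.cosh t)) =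
      π / (2 * sin (π * ν)) * (besselIExp (-ν) (log q) - besselIExp ν (log q)) := by
  have hneg (n : ℤ) : -ν ≠ n := fun h => hν (-n) (by push_cast; rw [← h, neg_neg])
  have hodd : ∑' i, gammaPairTerm (-ν) (-q) q i = -∑' i, gammaPairTerm ν (-q) q i := by
    rw [← (Equiv.prodComm ℕ ℕ).tsum_eq, ← tsum_neg]
    congr with ⟨k, m⟩
    simp only [gammaPairTerm, Equiv.prodComm_apply, Prod.swap_prod_mk]
    rw [show -ν - (m : ℂ) + k = -(ν - k + m) by ring, div_neg, mul_comm]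
  have hsplit (t : ℝ) : cosh (ν * t) * cexp (-(2 * q * Real.cosh t)) =
      (cexp (ν * t - q * Real.exp t + -q * Real.exp (-t)) +
        cexp (-ν * t - q * Real.exp t + -q * Real.exp (-t))) / 2 := by
    rw [cosh, div_mul_eq_mul_div, add_mul, ← exp_add, ← exp_add, Real.cosh_eq]
    push_cast
    ring_nf
  simp_rw [hsplit]
  rw [integral_div, integral_add (integrableOn_exp_add_mul_exp_neg ν (-q) hq)
    (integrableOn_exp_add_mul_exp_neg (-ν) (-q) hq),
    integral_exp_neg_mul_exp_add_mul_exp_neg hν hq,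
    integral_exp_neg_mul_exp_add_mul_exp_neg hneg hq, hodd, neg_neg, mul_neg, sin_neg, div_neg]
  field_simp
  ring

lemma cos_pos_of_mem_Ioo_zero_pi_div_two {θ : ℝ} (hθ : θ ∈ Ioo 0 (π / 2)) : 0 < Real.cos θ :=
  Real.cos_pos_of_mem_Ioo ⟨by linarith [hθ.1, Real.pi_pos], hθ.2⟩

lemma ofReal_sq_cpow {y : ℝ} (hy : 0 ≤ y) (w : ℂ) : ((y : ℂ) ^ 2) ^ w = (y : ℂ) ^ (2 * w) :=
  (cpow_ofNat_mul' (by simp [arg_ofReal_of_nonneg hy, Real.pi_pos])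
    (by simp [arg_ofReal_of_nonneg hy, Real.pi_pos.le]) w).symm

lemma betaIntegral_one_half (s : ℂ) :
    betaIntegral (1 / 2) (s + 1 / 2) =
      2 * ∫ θ in Ioo 0 (π / 2), (Real.cos θ : ℂ) ^ (2 * s) := by
  have hderiv (θ : ℝ) : HasDerivAt (fun θ => Real.sin θ ^ 2) (2 * Real.sin θ * Real.cos θ) θ := by
    simpa using! (Real.hasDerivAt_sin θ).pow 2
  have hsin {θ : ℝ} (hθ : θ ∈ Ioo 0 (π / 2)) : 0 < Real.sin θ :=
    Real.sin_pos_of_pos_of_lt_pi hθ.1 (by linarith [hθ.2, Real.pi_pos])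
  have hsubst := integral_Icc_deriv_smul_of_deriv_nonneg (a := 0) (b := π / 2)
    (g := fun x : ℝ => (x : ℂ) ^ ((1 / 2 : ℂ) - 1) * (1 - x : ℂ) ^ (s + 1 / 2 - 1))
    (by fun_prop) (fun θ _ => hderiv θ)
    (fun θ hθ => mul_nonneg (mul_nonneg zero_le_two (hsin hθ).le)
      (cos_pos_of_mem_Ioo_zero_pi_div_two hθ).le) (by positivity)
  rw [integral_Icc_eq_integral_Ioo, Real.sin_zero, Real.sin_pi_div_two] at hsubst
  norm_num only at hsubst
  rw [betaIntegral, intervalIntegral.integral_of_le zero_le_one, ← integral_Icc_eq_integral_Ioc,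
    ← integral_const_mul]
  norm_num only
  rw [← hsubst]
  refine setIntegral_congr_fun measurableSet_Ioo fun θ hθ => ?_
  have hsin0 : (Real.sin θ : ℂ) ≠ 0 := ofReal_ne_zero.2 (hsin hθ).ne'
  have hcos0 : (Real.cos θ : ℂ) ≠ 0 := ofReal_ne_zero.2 (cos_pos_of_mem_Ioo_zero_pi_div_two hθ).ne'
  have hone_sub : 1 - (Real.sin θ : ℂ) ^ 2 = (Real.cos θ : ℂ) ^ 2 := by
    rw [← ofReal_pow (Real.cos θ), Real.cos_sq']
    push_cast
    rfl
  rw [real_smul, ofReal_pow, hone_sub, ofReal_sq_cpow (hsin hθ).le,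
    ofReal_sq_cpow (cos_pos_of_mem_Ioo_zero_pi_div_two hθ).le,
    show (2 : ℂ) * -(1 / 2) = -1 by ring, cpow_neg_one,
    show 2 * (s + 1 / 2 - 1) = 2 * s - 1 by ring, cpow_sub _ _ hcos0, cpow_one]
  simp only [ofReal_mul, ofReal_ofNat]
  field_simp

lemma integral_cos_cpow {s : ℂ} (hs : -1 / 2 < s.re) :
    ∫ θ in Ioo 0 (π / 2), (Real.cos θ : ℂ) ^ (2 * s) =
      π / 2 * 2 ^ (-(2 * s)) * Gamma (2 * s + 1) / Gamma (s + 1) ^ 2 := by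
  have hhalf : 0 < (s + 1 / 2).re := by simp; linarith
  have hΓ : Gamma (s + 1) ≠ 0 := Gamma_ne_zero_of_re_pos (by simp; linarith)
  have hdup := Gamma_mul_Gamma_add_half (s + 1 / 2)
  rw [show s + 1 / 2 + 1 / 2 = s + 1 by ring, show 2 * (s + 1 / 2) = 2 * s + 1 by ring,
    show 1 - (2 * s + 1) = -(2 * s) by ring, ← eq_div_iff hΓ] at hdup
  have hsqrt : (π : ℂ) ^ (1 / 2 : ℂ) = √π := by
    rw [Real.sqrt_eq_rpow, ofReal_cpow Real.pi_pos.le]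
    norm_num
  have hpi : (√π : ℂ) * √π = π := by rw [← ofReal_mul, Real.mul_self_sqrt Real.pi_pos.le]
  rw [← mul_right_inj' (two_ne_zero (α := ℂ)), ← betaIntegral_one_half,
    betaIntegral_eq_Gamma_mul_div _ _ (by norm_num) hhalf,
    show 1 / 2 + (s + 1 / 2) = s + 1 by ring, Gamma_one_half_eq, hsqrt, hdup]
  field_simp
  linear_combination Gamma (2 * s + 1) * hpi

lemma choose_eq_Gamma_div {s : ℂ} {j : ℕ} (hs : ∀ m : ℕ, s - j + 1 ≠ -m) :
    Ring.choose s j = Gamma (s + 1) / (j ! * Gamma (s - j + 1)) := by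
  have hpoch := Gamma_add_nat_div_Gamma_eq (n := j) _ hs
  rw [show s - j + 1 + j = s + 1 by ring, ← Polynomial.ascPochhammer_smeval_eq_eval,
    ← Ring.factorial_nsmul_multichoose_eq_ascPochhammer, nsmul_eq_mul] at hpoch
  have hfac : (j ! : ℂ) ≠ 0 := mod_cast j.factorial_ne_zero
  rw [Ring.choose, mul_comm, ← div_div, hpoch]
  field_simp

lemma ne_neg_natCast_of_re_pos {s : ℂ} (hs : 0 < s.re) (m : ℕ) : s ≠ -m := fun h => by
  rw [h, neg_re, natCast_re, neg_pos] at hs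
  exact hs.not_ge m.cast_nonneg

/-- The Chu–Vandermonde identity with binomial coefficients written through `Γ`. -/
lemma sum_antidiagonal_inv_factorial_mul_Gamma {μ ν : ℂ} (hμ : 0 ≤ μ.re) (hν : 0 ≤ ν.re) (k : ℕ) :
    ∑ p ∈ Finset.HasAntidiagonal.antidiagonal k,
        1 / (p.1 ! * Gamma (μ + p.1 + 1)) * (1 / (p.2 ! * Gamma (ν + p.2 + 1))) =
      Gamma (μ + ν + 2 * k + 1) /
        (k ! * Gamma (μ + ν + k + 1) * Gamma (μ + k + 1) * Gamma (ν + k + 1)) := by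
  have hre {s : ℂ} (hs : 0 ≤ s.re) (m : ℕ) : 0 < (s + m + 1).re := by
    simp only [add_re, natCast_re, one_re]
    positivity
  have hchoose {s : ℂ} (hs : 0 ≤ s.re) (i j : ℕ) :
      Ring.choose (s + i + j) j = Gamma (s + i + j + 1) / (j ! * Gamma (s + i + 1)) := by
    have := choose_eq_Gamma_div (s := s + i + j) (j := j)
    rw [add_sub_cancel_right] at this
    exact this (ne_neg_natCast_of_re_pos (hre hs i))
  have hvan := Ring.add_choose_eq (r := ν + k) (s := μ + k) k (Commute.all _ _)
  rw [show ν + k + (μ + k) = μ + ν + k + k by ring,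
    hchoose (add_re μ ν ▸ add_nonneg hμ hν)] at hvan
  have hΓμ := Gamma_ne_zero_of_re_pos (hre hμ k)
  have hΓν := Gamma_ne_zero_of_re_pos (hre hν k)
  rw [show μ + ν + 2 * k + 1 = μ + ν + k + k + 1 by ring, ← div_div, ← div_div, hvan,
    Finset.sum_div, Finset.sum_div]
  refine Finset.sum_congr rfl fun p hp => ?_
  have hp' : (k : ℂ) = p.1 + p.2 := mod_cast (Finset.HasAntidiagonal.mem_antidiagonal.1 hp).symm
  have h₁ := hchoose hν p.2 p.1
  have h₂ := hchoose hμ p.1 p.2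
  rw [hp', show ν + (p.1 + p.2) = ν + p.2 + p.1 by ring,
    show μ + (p.1 + p.2) = μ + p.1 + p.2 by ring, h₁, h₂]
  rw [hp', show ν + (p.1 + p.2) = ν + p.2 + p.1 by ring] at hΓν
  rw [hp', show μ + (p.1 + p.2) = μ + p.1 + p.2 by ring] at hΓμ
  field_simp

lemma norm_Gamma_add_one_le {ν : ℂ} (hν : 0 ≤ ν.re) (k : ℕ) :
    ‖Gamma (ν + 1)‖ ≤ ‖Gamma (ν + k + 1)‖ := by
  induction k with
  | zero => simp
  | succ k ih =>
    have hone : 1 ≤ ‖ν + k + 1‖ := by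
      refine le_trans ?_ (re_le_norm _)
      simp only [add_re, natCast_re, one_re]
      linarith [k.cast_nonneg (α := ℝ)]
    have hne : ν + k + 1 ≠ 0 := norm_pos_iff.1 (zero_lt_one.trans_le hone)
    push_cast
    rw [← add_assoc, Gamma_add_one _ hne, norm_mul]
    exact ih.trans (le_mul_of_one_le_left (norm_nonneg _) hone)

lemma norm_besselIExp_term_le {ν : ℂ} (hν : 0 ≤ ν.re) (l : ℂ) (k : ℕ) :
    ‖cexp ((ν + 2 * k) * l) / (k ! * Gamma (ν + k + 1))‖ ≤
      Real.exp (ν * l).re / ‖Gamma (ν + 1)‖ * (Real.exp (2 * l.re) ^ k / k !) := by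
  have hΓ : 0 < ‖Gamma (ν + 1)‖ :=
    norm_pos_iff.2 (Gamma_ne_zero_of_re_pos (by rw [add_re, one_re]; positivity))
  have hexp : ‖cexp ((ν + 2 * k) * l)‖ = Real.exp (ν * l).re * Real.exp (2 * l.re) ^ k := by
    rw [norm_exp, ← Real.exp_nat_mul, ← Real.exp_add]
    simp
    ring_nf
  rw [norm_div, hexp, norm_mul, norm_natCast, div_mul_div_comm, mul_comm ‖Gamma (ν + 1)‖]
  gcongr
  exact norm_Gamma_add_one_le hν k

lemma summable_norm_besselIExp_term {ν : ℂ} (hν : 0 ≤ ν.re) (l : ℂ) :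
    Summable fun k : ℕ => ‖cexp ((ν + 2 * k) * l) / (k ! * Gamma (ν + k + 1))‖ :=
  .of_nonneg_of_le (fun _ => norm_nonneg _) (norm_besselIExp_term_le hν l)
    ((Real.summable_pow_div_factorial _).mul_left _)

lemma besselIExp_mul_besselIExp {μ ν : ℂ} (hμ : 0 ≤ μ.re) (hν : 0 ≤ ν.re) (l : ℂ) :
    besselIExp μ l * besselIExp ν l =
      ∑' k : ℕ, cexp ((μ + ν + 2 * k) * l) * (Gamma (μ + ν + 2 * k + 1) /
        (k ! * Gamma (μ + ν + k + 1) * Gamma (μ + k + 1) * Gamma (ν + k + 1))) := by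
  rw [besselIExp, besselIExp, tsum_mul_tsum_eq_tsum_sum_antidiagonal_of_summable_norm
    (summable_norm_besselIExp_term hμ l) (summable_norm_besselIExp_term hν l)]
  congr with k
  rw [← sum_antidiagonal_inv_factorial_mul_Gamma hμ hν k, Finset.mul_sum]
  refine Finset.sum_congr rfl fun p hp => ?_
  have hp' : (k : ℂ) = p.1 + p.2 := mod_cast (Finset.HasAntidiagonal.mem_antidiagonal.1 hp).symm
  rw [show (μ + ν + 2 * k) * l = (μ + 2 * p.1) * l + (ν + 2 * p.2) * l by rw [hp']; ring, exp_add]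
  ring

lemma norm_besselIExp_term_add_le {ν : ℂ} (hν : 0 ≤ ν.re) (l : ℂ) {r : ℝ} (hr : r ≤ 0) (k : ℕ) :
    ‖cexp ((ν + 2 * k) * (l + r)) / (k ! * Gamma (ν + k + 1))‖ ≤
      Real.exp (ν * l).re / ‖Gamma (ν + 1)‖ * (Real.exp (2 * l.re) ^ k / k !) := by
  refine (norm_besselIExp_term_le hν (l + r) k).trans ?_
  have hre : (ν * (l + r)).re ≤ (ν * l).re := by
    rw [mul_add, add_re, re_mul_ofReal]
    linarith [mul_nonpos_of_nonneg_of_nonpos hν hr]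
  have hl : (l + r).re ≤ l.re := by
    rw [add_re, ofReal_re]
    linarith
  gcongr

lemma log_cos_nonpos {θ : ℝ} (hθ : θ ∈ Ioo 0 (π / 2)) : Real.log (Real.cos θ) ≤ 0 :=
  Real.log_nonpos (cos_pos_of_mem_Ioo_zero_pi_div_two hθ).le (Real.cos_le_one θ)

/-- Neumann's formula `∫₀^{π/2} I_ν(w cos θ) dθ = (π / 2) I_{ν/2}(w / 2) ^ 2`, where
`l = log (w / 2)`. -/
lemma integral_besselIExp_add_log_cos {ν : ℂ} (hν : 0 ≤ ν.re) (l : ℂ) :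
    ∫ θ in Ioo 0 (π / 2), besselIExp ν (l + Real.log (Real.cos θ)) =
      π / 2 * besselIExp (ν / 2) (l - Real.log 2) ^ 2 := by
  have hν' : 0 ≤ (ν / 2).re := by simp; linarith
  have hdom := hasSum_integral_of_dominated_convergence
    (μ := volume.restrict (Ioo 0 (π / 2)))
    (F := fun (k : ℕ) (θ : ℝ) =>
      cexp ((ν + 2 * k) * (l + Real.log (Real.cos θ))) / (k ! * Gamma (ν + k + 1)))
    (f := fun θ : ℝ => besselIExp ν (l + Real.log (Real.cos θ)))
    (fun k _ => Real.exp (ν * l).re / ‖Gamma (ν + 1)‖ * (Real.exp (2 * l.re) ^ k / k !))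
    (fun k => Measurable.aestronglyMeasurable (by fun_prop))
    (fun k => (ae_restrict_iff' measurableSet_Ioo).2 (ae_of_all _ fun θ hθ =>
      norm_besselIExp_term_add_le hν l (log_cos_nonpos hθ) k))
    (ae_of_all _ fun _ => (Real.summable_pow_div_factorial _).mul_left _)
    (integrable_const _)
    (ae_of_all _ fun θ => (summable_norm_besselIExp_term hν _).of_norm.hasSum)
  rw [← hdom.tsum_eq, sq, besselIExp_mul_besselIExp hν' hν', ← tsum_mul_left]
  congr with k
  have hterm : EqOn (fun θ : ℝ => cexp ((ν + 2 * k) * (l + Real.log (Real.cos θ))) /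
      (k ! * Gamma (ν + k + 1))) (fun θ => cexp ((ν + 2 * k) * l) / (k ! * Gamma (ν + k + 1)) *
        (Real.cos θ : ℂ) ^ (2 * (ν / 2 + k))) (Ioo 0 (π / 2)) := fun θ hθ => by
    have hcos := cos_pos_of_mem_Ioo_zero_pi_div_two hθ
    dsimp only
    rw [cpow_def_of_ne_zero (ofReal_ne_zero.2 hcos.ne'), ← ofReal_log hcos.le, mul_add, exp_add]
    ring_nf
  have hs : -1 / 2 < (ν / 2 + k).re := by
    rw [add_re, natCast_re]
    linarith [k.cast_nonneg (α := ℝ)]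
  have htwo : (2 : ℂ) ^ (-(2 * (ν / 2 + k))) = cexp (-((ν + 2 * k) * Real.log 2)) := by
    rw [cpow_def_of_ne_zero two_ne_zero, ← ofReal_ofNat, ← ofReal_log zero_le_two, ofReal_ofNat]
    ring_nf
  rw [setIntegral_congr_fun measurableSet_Ioo hterm, integral_const_mul, integral_cos_cpow hs, htwo,
    add_halves, show (ν + 2 * k) * (l - Real.log 2) = (ν + 2 * k) * l + -((ν + 2 * k) * Real.log 2)
      by ring, exp_add, show 2 * (ν / 2 + (k : ℂ)) = ν + 2 * k by ring]
  field_simp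

lemma continuousOn_besselIExp :
    ContinuousOn (fun p : ℂ × ℂ => besselIExp p.1 p.2) {p | 0 ≤ p.1.re} := by
  rintro ⟨ν₀, l₀⟩ -
  have hΓ : Continuous fun ν : ℂ => ‖(Gamma (ν + 1))⁻¹‖ :=
    (differentiable_one_div_Gamma.continuous.comp (continuous_add_const 1)).norm
  have hterm (k : ℕ) : Continuous fun p : ℂ × ℂ =>
      cexp ((p.1 + 2 * k) * p.2) / (k ! * Gamma (p.1 + k + 1)) := by
    have : Continuous fun p : ℂ × ℂ => (Gamma (p.1 + k + 1))⁻¹ :=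
      differentiable_one_div_Gamma.continuous.comp (by fun_prop)
    simp_rw [div_eq_mul_inv, mul_inv]
    fun_prop
  refine tendsto_tsum_of_dominated_convergence
    (bound := fun k => Real.exp ((ν₀ * l₀).re + 1) * (‖(Gamma (ν₀ + 1))⁻¹‖ + 1) *
      (Real.exp (2 * (l₀.re + 1)) ^ k / k !))
    ((Real.summable_pow_div_factorial _).mul_left _)
    (fun k => (hterm k).continuousWithinAt) ?_
  have hlt {f : ℂ × ℂ → ℝ} (hf : Continuous f) : ∀ᶠ p in 𝓝[{p | 0 ≤ p.1.re}] (ν₀, l₀),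
      f p < f (ν₀, l₀) + 1 :=
    hf.continuousWithinAt.eventually_lt_const (lt_add_one _)
  filter_upwards [self_mem_nhdsWithin, hlt (f := fun p => (p.1 * p.2).re) (by fun_prop),
    hlt (f := fun p => p.2.re) (by fun_prop), hlt (hΓ.comp continuous_fst)]
    with p hp h_exp h_re h_Gamma k
  refine (norm_besselIExp_term_le hp _ k).trans ?_
  rw [div_eq_mul_inv _ ‖_‖, ← norm_inv]
  gcongr
  exact h_Gamma.le

lemma continuous_besselIExp {ν : ℂ} (hν : 0 ≤ ν.re) : Continuous (besselIExp ν) :=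
  continuousOn_univ.1 <| continuousOn_besselIExp.comp (f := fun l => (ν, l)) (by fun_prop)
    fun _ _ => hν

lemma integrableOn_besselIExp_add_log_cos {ν : ℂ} (hν : 0 ≤ ν.re) (l : ℂ) :
    IntegrableOn (fun θ : ℝ => besselIExp ν (l + Real.log (Real.cos θ))) (Ioo 0 (π / 2)) := by
  have hmeas : Measurable fun θ : ℝ => besselIExp ν (l + Real.log (Real.cos θ)) :=
    (continuous_besselIExp hν).measurable.comp (by fun_prop)
  exact Measure.integrableOn_of_bounded (by simp) hmeas.aestronglyMeasurable <|
    (ae_restrict_iff' measurableSet_Ioo).2 <| ae_of_all _ fun θ hθ =>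
      tsum_of_norm_bounded ((Real.summable_pow_div_factorial _).mul_left _).hasSum
        (norm_besselIExp_term_add_le hν l (log_cos_nonpos hθ))

lemma abs_harmonic_le_factorial (k : ℕ) : |((harmonic k : ℚ) : ℝ)| ≤ k ! := by
  have hle : harmonic k ≤ k := by
    refine (Finset.sum_le_card_nsmul (Finset.range k) _ 1 fun i _ => ?_).trans (by simp)
    exact inv_le_one_of_one_le₀ (mod_cast i.succ_pos)
  have hnonneg : 0 ≤ harmonic k := by unfold harmonic; positivity
  rw [abs_of_nonneg (mod_cast hnonneg)]
  exact (Rat.cast_le.2 hle).trans (mod_cast k.self_le_factorial)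

lemma summable_neg_one_pow_mul_div_factorial_sq_mul {c : ℕ → ℝ} (hc : ∀ k, |c k| ≤ k !) (q : ℝ) :
    Summable fun k : ℕ => (-1 : ℝ) ^ k * q ^ (2 * k) / (k ! : ℝ) ^ 2 * c k := by
  refine .of_norm_bounded (Real.summable_pow_div_factorial (q ^ 2)) fun k => ?_
  have : (0 : ℝ) < k ! := mod_cast k.factorial_pos
  rw [Real.norm_eq_abs, abs_mul, abs_div, abs_mul, abs_neg_one_pow, one_mul, pow_mul,
    abs_of_nonneg (by positivity : 0 ≤ (q ^ 2) ^ k), abs_of_nonneg (by positivity)]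
  calc (q ^ 2) ^ k / (k ! : ℝ) ^ 2 * |c k|
      ≤ (q ^ 2) ^ k / (k ! : ℝ) ^ 2 * k ! := by gcongr; exact hc k
    _ = (q ^ 2) ^ k / k ! := by field_simp

lemma hasSum_besselY0 (w : ℝ) :
    HasSum (fun k : ℕ => (-1 : ℝ) ^ k * (w / 2) ^ (2 * k) / (k ! : ℝ) ^ 2 *
        (-Real.log (w / 2) - Real.eulerMascheroniConstant + ((harmonic k : ℚ) : ℝ)))
      (-(π / 2 * besselY0 w)) := by
  have hfac (k : ℕ) : |(1 : ℝ)| ≤ k ! := by simpa using Nat.one_le_iff_ne_zero.2 k.factorial_ne_zero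
  have hJ := (summable_neg_one_pow_mul_div_factorial_sq_mul hfac (w / 2)).hasSum.mul_right
    (-Real.log (w / 2) - Real.eulerMascheroniConstant)
  have hH := summable_neg_one_pow_mul_div_factorial_sq_mul abs_harmonic_le_factorial (w / 2)
  have hshift :
      ∑' k : ℕ, (-1 : ℝ) ^ k * (w / 2) ^ (2 * k) / (k ! : ℝ) ^ 2 * ((harmonic k : ℚ) : ℝ) =
      -∑' k : ℕ, (-1 : ℝ) ^ k * ((harmonic (k + 1) : ℚ) : ℝ) * (w / 2) ^ (2 * (k + 1)) /
        ((k + 1)! : ℝ) ^ 2 := by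
    rw [hH.tsum_eq_zero_add, harmonic_zero, Rat.cast_zero, mul_zero, zero_add, ← tsum_neg]
    congr with k
    rw [pow_succ (-1 : ℝ) k]
    ring
  have hsum := hJ.add hH.hasSum
  rw [hshift] at hsum
  have hvalue : -(π / 2 * besselY0 w) =
      besselJ0 w * (-Real.log (w / 2) - Real.eulerMascheroniConstant) +
        -∑' k : ℕ, (-1 : ℝ) ^ k * ((harmonic (k + 1) : ℚ) : ℝ) * (w / 2) ^ (2 * (k + 1)) /
          ((k + 1)! : ℝ) ^ 2 := by
    rw [besselY0]
    field_simp
    ring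
  rw [hvalue, besselJ0]
  simpa only [mul_one, ← mul_add] using hsum

lemma pi_div_two_mul_struveH0_eq_neg_tsum {w : ℝ} (hw : 0 < w) :
    (π / 2 * struveH0 w : ℂ) = -∑' i, gammaPairTerm 0 (w / 2) (w / 2) i := by
  have hq : 0 < (w / 2 : ℂ).re := by simpa
  have hK : ∫ t in Ioi (0 : ℝ), cexp (0 * t - w / 2 * Real.exp t + w / 2 * Real.exp (-t)) =
      π / 2 * struveK0 w := by
    rw [struveK0]
    push_cast
    rw [← mul_assoc, div_mul_div_cancel₀ two_ne_zero, div_self (ofReal_ne_zero.2 Real.pi_ne_zero),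
      one_mul, ← integral_complex_ofReal]
    congr with t
    rw [Real.sinh_eq]
    push_cast
    ring_nf
  have hsum := hasSum_scaledUpperGamma_add_scaledLowerGamma_sub 0 (w / 2) hq
  rw [hK] at hsum
  have hY := hsum.unique ((Complex.hasSum_ofReal.2 (hasSum_besselY0 w)).congr_fun fun k => by
    rw [zero_sub, scaledUpperGamma_neg_add_scaledLowerGamma_neg hq, neg_pow, ← ofReal_ofNat,
      ← ofReal_div, ← ofReal_log (by positivity)]
    push_cast
    ring)
  rw [struveH0]
  push_cast at hY ⊢
  linear_combination hY

lemma hasSum_pow_div_factorial_mul_pow_div_factorial (p q : ℂ) :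
    HasSum (fun i : ℕ × ℕ => p ^ i.1 / i.1 ! * (q ^ i.2 / i.2 !)) (cexp (p + q)) := by
  have hsummable : Summable fun i : ℕ × ℕ => p ^ i.1 / i.1 ! * (q ^ i.2 / i.2 ! : ℂ) :=
    summable_mul_of_summable_norm (f := fun m : ℕ => p ^ m / (m ! : ℂ))
      (g := fun n : ℕ => q ^ n / (n ! : ℂ))
      (summable_norm_pow_div_factorial p) (summable_norm_pow_div_factorial q)
  have hprod := (hasSum_pow_div_factorial p).mul (hasSum_pow_div_factorial q) hsummable
  rwa [← exp_add] at hprod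

lemma hasSum_sin_two_mul_mul_sin (q θ : ℂ) :
    HasSum (fun i : ℕ × ℕ => q ^ i.1 / i.1 ! * ((-q) ^ i.2 / i.2 !) * sin ((-i.1 + i.2) * θ))
      (-sin (2 * q * sin θ)) := by
  have hexp (θ : ℂ) : HasSum
      (fun i : ℕ × ℕ => q ^ i.1 / i.1 ! * ((-q) ^ i.2 / i.2 !) * cexp ((-i.1 + i.2) * θ * I))
      (cexp (-(2 * q * sin θ) * I)) := by
    have hvalue : -(2 * q * sin θ) * I = q * cexp (-θ * I) + -q * cexp (θ * I) := by
      linear_combination (-q * I) * two_sin θ - q * (cexp (-θ * I) - cexp (θ * I)) * I_mul_I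
    rw [hvalue]
    refine (hasSum_pow_div_factorial_mul_pow_div_factorial _ _).congr_fun fun i => ?_
    rw [mul_pow, mul_pow, ← exp_nat_mul, ← exp_nat_mul,
      show (-i.1 + i.2) * θ * I = i.1 * (-θ * I) + i.2 * (θ * I) by ring, exp_add]
    ring
  have hsin (z : ℂ) : sin z = (cexp (z * I) - cexp (-z * I)) * -(I / 2) := by
    linear_combination two_sin z / 2
  have hsub := ((hexp θ).sub (hexp (-θ))).mul_right (-(I / 2))
  rw [sin_neg, show -(2 * q * -sin θ) = - -(2 * q * sin θ) by ring, ← hsin, sin_neg] at hsub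
  refine hsub.congr_fun fun i => ?_
  rw [hsin, ← mul_sub, mul_assoc _ (_ - _), mul_neg _ θ]

lemma integral_sin_mul_complex (z : ℂ) (b : ℝ) :
    ∫ θ in (0 : ℝ)..b, sin (z * θ) = (1 - cos (z * b)) / z := by
  rcases eq_or_ne z 0 with rfl | hz
  · simp
  have hderiv (θ : ℝ) : HasDerivAt (fun θ : ℝ => -cos (z * θ) / z) (sin (z * θ)) θ := by
    have := (((hasDerivAt_id (θ : ℂ)).const_mul z).ccos.neg.div_const z).comp_ofReal
    simpa [hz] using this
  rw [intervalIntegral.integral_eq_sub_of_hasDerivAt (fun θ _ => hderiv θ)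
    (Continuous.intervalIntegrable (by fun_prop) _ _)]
  simp
  ring

lemma tsum_gammaPairTerm_mul_cos_eq_zero (q : ℂ) :
    ∑' i : ℕ × ℕ, gammaPairTerm 0 q q i * cos ((-i.1 + i.2) * (π / 2)) = 0 := by
  refine tsum_eq_zero_of_antisymm fun ⟨k, m⟩ => ?_
  have hcos : cos ((-m + k) * (π / 2)) = (-1) ^ (k + m) * cos ((-k + m) * (π / 2)) := by
    rw [pow_add, mul_comm ((-1) ^ k), mul_assoc, ← cos_antiperiodic.add_nat_mul_eq,
      ← cos_antiperiodic.sub_nat_mul_eq]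
    ring_nf
  simp only [gammaPairTerm, Prod.swap_prod_mk, hcos]
  rw [neg_pow q k, neg_pow q m, show (0 : ℂ) - m + k = -(0 - k + m) by ring]
  rcases neg_one_pow_eq_or ℂ k with hk | hk <;> rcases neg_one_pow_eq_or ℂ m with hm | hm <;>
    simp only [pow_add, hk, hm, div_neg] <;> ring

lemma tsum_gammaPairTerm_zero_eq_neg_integral_sin (q : ℂ) :
    ∑' i, gammaPairTerm 0 q q i = -∫ θ in (0 : ℝ)..π / 2, sin (2 * q * Real.cos θ) := by
  have hreflect : ∫ θ in (0 : ℝ)..π / 2, sin (2 * q * Real.cos θ) =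
      ∫ θ in (0 : ℝ)..π / 2, sin (2 * q * Real.sin θ) := by
    have := intervalIntegral.integral_comp_sub_left (a := 0) (b := π / 2)
      (fun θ : ℝ => sin (2 * q * Real.sin θ)) (π / 2)
    simpa only [Real.sin_pi_div_two_sub, sub_self, sub_zero] using this
  have hsin (i : ℕ × ℕ) (θ : ℝ) : ‖sin ((-i.1 + i.2) * (θ : ℂ))‖ ≤ 1 := by
    have : sin ((-i.1 + i.2) * (θ : ℂ)) = (Real.sin ((-i.1 + i.2) * θ) : ℝ) := by push_cast; rfl
    rw [this, norm_real]
    exact Real.abs_sin_le_one _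
  have hcoeff := summable_mul_of_summable_norm (summable_norm_pow_div_factorial q).norm
    (summable_norm_pow_div_factorial (-q)).norm
  have hdom := intervalIntegral.hasSum_integral_of_dominated_convergence (μ := volume)
    (a := 0) (b := π / 2)
    (F := fun (i : ℕ × ℕ) (θ : ℝ) =>
      q ^ i.1 / i.1 ! * ((-q) ^ i.2 / i.2 !) * sin ((-i.1 + i.2) * θ))
    (f := fun θ : ℝ => -sin (2 * q * sin θ))
    (fun i _ => ‖q ^ i.1 / (i.1 ! : ℂ)‖ * ‖(-q) ^ i.2 / (i.2 ! : ℂ)‖)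
    (fun i => Continuous.aestronglyMeasurable (by fun_prop))
    (fun i => ae_of_all _ fun θ _ => by
      rw [norm_mul, norm_mul]
      exact mul_le_of_le_one_right (by positivity) (hsin i θ))
    (ae_of_all _ fun _ _ => hcoeff)
    intervalIntegrable_const
    (ae_of_all _ fun θ _ => hasSum_sin_two_mul_mul_sin q θ)
  have hterm (i : ℕ × ℕ) :
      ∫ θ in (0 : ℝ)..π / 2, q ^ i.1 / i.1 ! * ((-q) ^ i.2 / i.2 !) * sin ((-i.1 + i.2) * θ) =
        gammaPairTerm 0 q q i - gammaPairTerm 0 q q i * cos ((-i.1 + i.2) * (π / 2)) := by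
    rw [intervalIntegral.integral_const_mul, integral_sin_mul_complex, gammaPairTerm]
    push_cast
    ring
  have hintegrals := hdom.congr_fun fun i => (hterm i).symm
  have hsub := ((summable_gammaPairTerm 0 q q).hasSum.sub hintegrals).tsum_eq
  simp only [sub_sub_cancel, tsum_gammaPairTerm_mul_cos_eq_zero, intervalIntegral.integral_neg,
    ← ofReal_sin] at hsub
  rw [hreflect, ← sub_eq_zero, ← hsub]

lemma pi_div_two_mul_struveH0_eq_integral_sin {w : ℝ} (hw : 0 < w) :
    π / 2 * struveH0 w = ∫ θ in (0 : ℝ)..π / 2, Real.sin (w * Real.cos θ) := by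
  have h := pi_div_two_mul_struveH0_eq_neg_tsum hw
  rw [tsum_gammaPairTerm_zero_eq_neg_integral_sin, neg_neg, mul_div_cancel₀ _ two_ne_zero] at h
  apply ofReal_injective
  rw [← intervalIntegral.integral_ofReal]
  push_cast at h ⊢
  exact h

/-- The Laplace transform `∫_0^{π/2} e^{-w cos θ} dθ`, which is `π / 2` times the difference of the
modified Bessel function `I₀` and the modified Struve function `L₀`. It is taken over the open
interval because `θ ↦ log (cos θ)` is only meaningful there. -/
noncomputable def cosLaplace (w : ℂ) : ℂ :=
  ∫ θ in Ioo 0 (π / 2), cexp (-(w * Real.cos θ))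

lemma cosLaplace_eq_intervalIntegral (w : ℂ) :
    cosLaplace w = ∫ θ in (0 : ℝ)..π / 2, cexp (-(w * Real.cos θ)) := by
  rw [cosLaplace, intervalIntegral.integral_of_le (by positivity), integral_Ioc_eq_integral_Ioo]

lemma continuous_cosLaplace : Continuous cosLaplace := by
  simp only [funext cosLaplace_eq_intervalIntegral]
  exact intervalIntegral.continuous_parametric_intervalIntegral_of_continuous'
    (by fun_prop) 0 (π / 2)

lemma norm_exp_neg_mul_cos_le_one {w : ℂ} (hw : 0 ≤ w.re) {θ : ℝ} (hθ : θ ∈ Icc 0 (π / 2)) :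
    ‖cexp (-(w * Real.cos θ))‖ ≤ 1 := by
  have hcos : 0 ≤ Real.cos θ :=
    Real.cos_nonneg_of_neg_pi_div_two_le_of_le (by linarith [Real.pi_pos, hθ.1]) hθ.2
  rw [norm_exp, neg_re, re_mul_ofReal, Real.exp_le_one_iff]
  exact neg_nonpos.2 (mul_nonneg hw hcos)

lemma norm_integral_exp_neg_mul_cos_le {w : ℂ} (hw : 0 ≤ w.re) {b : ℝ} (hb : b ∈ Icc 0 (π / 2)) :
    ‖∫ θ in (0 : ℝ)..b, cexp (-(w * Real.cos θ))‖ ≤ b := by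
  have hle (θ : ℝ) (hθ : θ ∈ uIoc 0 b) : ‖cexp (-(w * Real.cos θ))‖ ≤ 1 := by
    rw [uIoc_of_le hb.1] at hθ
    exact norm_exp_neg_mul_cos_le_one hw ⟨hθ.1.le, hθ.2.trans hb.2⟩
  have hbound := intervalIntegral.norm_integral_le_of_norm_le_const hle
  rwa [sub_zero, one_mul, abs_of_nonneg hb.1] at hbound

lemma norm_integral_mul_deriv_le_of_deriv_nonpos {a b M : ℝ} (hab : a ≤ b)
    {u u' : ℝ → ℝ} {v v' : ℝ → ℂ}
    (hu : ∀ x ∈ Icc a b, HasDerivAt u (u' x) x) (hv : ∀ x ∈ Icc a b, HasDerivAt v (v' x) x)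
    (hu' : IntervalIntegrable u' volume a b) (hv' : IntervalIntegrable v' volume a b)
    (hneg : ∀ x ∈ Icc a b, u' x ≤ 0) (hub : 0 ≤ u b) (hM : ∀ x ∈ Icc a b, ‖v x‖ ≤ M) :
    ‖∫ x in a..b, u x * v' x‖ ≤ 2 * M * u a := by
  rw [← uIcc_of_le hab] at hu hv
  have hu'_integral := intervalIntegral.integral_eq_sub_of_hasDerivAt hu hu'
  have : 0 ≤ M := (norm_nonneg _).trans (hM a (left_mem_Icc.2 hab))
  have hua : 0 ≤ u a := by
    have := intervalIntegral.integral_mono_on hab hu' intervalIntegrable_const hneg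
    rw [hu'_integral, intervalIntegral.integral_zero] at this
    linarith
  have hparts := intervalIntegral.integral_mul_deriv_eq_deriv_mul
    (fun x hx => (hu x hx).ofReal_comp) hv
    ⟨hu'.1.ofReal, hu'.2.ofReal⟩ hv'
  have hrest : ‖∫ x in a..b, u' x * v x‖ ≤ M * (u a - u b) := by
    calc ‖∫ x in a..b, u' x * v x‖ ≤ ∫ x in a..b, -u' x * M := by
          refine intervalIntegral.norm_integral_le_of_norm_le hab (ae_of_all _ fun x hx => ?_)
            (hu'.neg.mul_const M)
          have hx' := Ioc_subset_Icc_self hx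
          rw [norm_mul, norm_real, Real.norm_of_nonpos (hneg x hx')]
          exact mul_le_mul_of_nonneg_left (hM x hx') (neg_nonneg.2 (hneg x hx'))
      _ = M * (u a - u b) := by
          rw [intervalIntegral.integral_mul_const, intervalIntegral.integral_neg, hu'_integral]
          ring
  have hboundary {x : ℝ} (hx : x ∈ Icc a b) (hux : 0 ≤ u x) : ‖u x * v x‖ ≤ M * u x := by
    rw [norm_mul, norm_real, Real.norm_of_nonneg hux, mul_comm]
    exact mul_le_mul_of_nonneg_right (hM x hx) hux
  rw [hparts]
  calc ‖u b * v b - u a * v a - ∫ x in a..b, u' x * v x‖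
      ≤ M * u b + M * u a + M * (u a - u b) :=
        (norm_sub_le _ _).trans <| add_le_add ((norm_sub_le _ _).trans <| add_le_add
          (hboundary (right_mem_Icc.2 hab) hub) (hboundary (left_mem_Icc.2 hab) hua)) hrest
    _ = 2 * M * u a := by ring

lemma norm_integral_exp_neg_mul_cos_tail_le {w : ℂ} (hw : 0 ≤ w.re) (hw₀ : w ≠ 0) {η : ℝ}
    (hη : η ∈ Ioc 0 (π / 2)) :
    ‖∫ θ in η..π / 2, cexp (-(w * Real.cos θ))‖ ≤ 2 / (‖w‖ * Real.sin η) := by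
  have hsin {θ : ℝ} (hθ : θ ∈ Icc η (π / 2)) : Real.sin θ ≠ 0 :=
    (Real.sin_pos_of_pos_of_lt_pi (hη.1.trans_le hθ.1) (by linarith [hθ.2, Real.pi_pos])).ne'
  have hu (θ : ℝ) (hθ : θ ∈ Icc η (π / 2)) :
      HasDerivAt (fun θ => (Real.sin θ)⁻¹) (-Real.cos θ / Real.sin θ ^ 2) θ :=
    (Real.hasDerivAt_sin θ).inv (hsin hθ)
  have hv (θ : ℝ) (_ : θ ∈ Icc η (π / 2)) : HasDerivAt (fun θ : ℝ => cexp (-(w * Real.cos θ)) / w)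
      (Real.sin θ * cexp (-(w * Real.cos θ))) θ := by
    refine ((((Real.hasDerivAt_cos θ).ofReal_comp).const_mul w).neg.cexp.div_const w).congr_deriv ?_
    simp only [Pi.neg_apply, ofReal_neg]
    field_simp
  have hu' : IntervalIntegrable (fun θ => -Real.cos θ / Real.sin θ ^ 2) volume η (π / 2) := by
    refine ContinuousOn.intervalIntegrable (.div (by fun_prop) (by fun_prop) fun θ hθ => ?_)
    exact pow_ne_zero 2 (hsin (uIcc_of_le hη.2 ▸ hθ))
  have hbound := norm_integral_mul_deriv_le_of_deriv_nonpos hη.2 hu hv hu'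
    (Continuous.intervalIntegrable (by fun_prop) _ _) (M := 1 / ‖w‖)
    (fun θ hθ => div_nonpos_of_nonpos_of_nonneg (neg_nonpos.2 <|
      Real.cos_nonneg_of_neg_pi_div_two_le_of_le (by linarith [Real.pi_pos, hη.1, hθ.1]) hθ.2)
      (sq_nonneg _))
    (by simp)
    (fun θ hθ => by
      rw [norm_div]
      gcongr
      exact norm_exp_neg_mul_cos_le_one hw ⟨hη.1.le.trans hθ.1, hθ.2⟩)
  have hcancel : ∫ θ in η..π / 2, ((Real.sin θ)⁻¹ : ℝ) * (Real.sin θ * cexp (-(w * Real.cos θ))) =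
      ∫ θ in η..π / 2, cexp (-(w * Real.cos θ)) := by
    refine intervalIntegral.integral_congr fun θ hθ => ?_
    rw [← mul_assoc, ← ofReal_mul, inv_mul_cancel₀ (hsin (uIcc_of_le hη.2 ▸ hθ)), ofReal_one,
      one_mul]
  rw [hcancel] at hbound
  exact hbound.trans_eq (by ring)

lemma norm_cosLaplace_le {w : ℂ} (hw : 0 ≤ w.re) (hw₀ : w ≠ 0) :
    ‖cosLaplace w‖ ≤ (1 + π) / √‖w‖ := by
  set s := √‖w‖
  have hs : 0 < s := Real.sqrt_pos.2 (norm_pos_iff.2 hw₀)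
  have hs_sq : ‖w‖ = s ^ 2 := (Real.sq_sqrt (norm_nonneg w)).symm
  have hpi := Real.pi_gt_three
  rw [cosLaplace_eq_intervalIntegral]
  rcases le_total (1 / s) (π / 2) with hle | hge
  · have hη : 1 / s ∈ Ioc 0 (π / 2) := ⟨by positivity, hle⟩
    have hint (a b : ℝ) :
        IntervalIntegrable (fun θ : ℝ => cexp (-(w * Real.cos θ))) volume a b :=
      Continuous.intervalIntegrable (by fun_prop) _ _
    have hsin : 2 / π * (1 / s) ≤ Real.sin (1 / s) := Real.mul_le_sin hη.1.le hη.2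
    rw [← intervalIntegral.integral_add_adjacent_intervals (hint 0 (1 / s)) (hint _ _)]
    calc _ ≤ 1 / s + 2 / (‖w‖ * Real.sin (1 / s)) :=
          norm_add_le_of_le (norm_integral_exp_neg_mul_cos_le hw ⟨hη.1.le, hη.2⟩)
            (norm_integral_exp_neg_mul_cos_tail_le hw hw₀ hη)
      _ ≤ 1 / s + 2 / (s ^ 2 * (2 / π * (1 / s))) := by rw [hs_sq]; gcongr
      _ = (1 + π) / s := by field_simp
  · calc _ ≤ π / 2 := norm_integral_exp_neg_mul_cos_le hw (right_mem_Icc.2 (by positivity))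
      _ ≤ 1 / s := hge
      _ ≤ (1 + π) / s := by gcongr; linarith

lemma norm_cosLaplace_mul_cosh_le {z : ℂ} (hz : 0 ≤ z.re) (hz₀ : z ≠ 0) (t : ℝ) :
    ‖cosLaplace (2 * z * Real.cosh t)‖ ≤ (1 + π) / √‖z‖ * Real.exp (-(1 / 2) * t) := by
  have hcosh := Real.cosh_pos t
  have hre : 0 ≤ (2 * z * Real.cosh t).re := by
    rw [re_mul_ofReal, ← ofReal_ofNat, re_ofReal_mul]
    positivity
  have hne : 2 * z * Real.cosh t ≠ 0 :=
    mul_ne_zero (mul_ne_zero two_ne_zero hz₀) (ofReal_ne_zero.2 hcosh.ne')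
  have hexp : Real.exp t ≤ 2 * Real.cosh t := by
    rw [Real.cosh_eq]
    linarith [Real.exp_pos (-t)]
  have hsqrt : √‖z‖ * Real.exp (1 / 2 * t) ≤ √‖2 * z * Real.cosh t‖ := by
    rw [one_div_mul_eq_div, Real.exp_half, ← Real.sqrt_mul (norm_nonneg z)]
    apply Real.sqrt_le_sqrt
    calc ‖z‖ * Real.exp t ≤ ‖z‖ * (2 * Real.cosh t) := by gcongr
      _ = ‖2 * z * Real.cosh t‖ := by
        rw [norm_mul, norm_mul, norm_real, Real.norm_of_nonneg hcosh.le, Complex.norm_ofNat]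
        ring
  have : 0 < √‖z‖ := Real.sqrt_pos.2 (norm_pos_iff.2 hz₀)
  calc ‖cosLaplace (2 * z * Real.cosh t)‖ ≤ (1 + π) / √‖2 * z * Real.cosh t‖ :=
        norm_cosLaplace_le hre hne
    _ ≤ (1 + π) / (√‖z‖ * Real.exp (1 / 2 * t)) := by gcongr
    _ = (1 + π) / √‖z‖ * Real.exp (-(1 / 2) * t) := by
      rw [neg_mul, Real.exp_neg, ← div_div, div_eq_mul_inv _ (Real.exp _)]

lemma norm_cos_mul_cosLaplace_mul_cosh_le {z : ℂ} (hz : 0 ≤ z.re) (hz₀ : z ≠ 0) (τ t : ℝ) :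
    ‖(Real.cos (τ * t) : ℂ) * cosLaplace (2 * z * Real.cosh t)‖ ≤
      (1 + π) / √‖z‖ * Real.exp (-(1 / 2) * t) := by
  rw [norm_mul, norm_real]
  exact (mul_le_of_le_one_left (norm_nonneg _) (Real.abs_cos_le_one _)).trans
    (norm_cosLaplace_mul_cosh_le hz hz₀ t)

lemma integrableOn_exp_neg_half_mul (C : ℝ) :
    IntegrableOn (fun t => C * Real.exp (-(1 / 2) * t)) (Ioi 0) :=
  (exp_neg_integrableOn_Ioi 0 one_half_pos).const_mul C

lemma continuous_cos_mul_cosLaplace_mul_cosh (z : ℂ) (τ : ℝ) :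
    Continuous fun t : ℝ => (Real.cos (τ * t) : ℂ) * cosLaplace (2 * z * Real.cosh t) := by
  have := continuous_cosLaplace
  fun_prop

lemma integrableOn_cos_mul_cosLaplace_mul_cosh {z : ℂ} (hz : 0 ≤ z.re) (hz₀ : z ≠ 0) (τ : ℝ) :
    IntegrableOn (fun t : ℝ => (Real.cos (τ * t) : ℂ) * cosLaplace (2 * z * Real.cosh t))
      (Ioi 0) :=
  (integrableOn_exp_neg_half_mul _).mono'
    (continuous_cos_mul_cosLaplace_mul_cosh z τ).aestronglyMeasurable
    (ae_of_all _ (norm_cos_mul_cosLaplace_mul_cosh_le hz hz₀ τ))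

lemma integral_norm_exp_neg_mul_cos (w : ℂ) :
    ∫ θ in Ioo 0 (π / 2), ‖cexp (-(w * Real.cos θ))‖ = ‖cosLaplace w.re‖ := by
  have hnorm (θ : ℝ) : ‖cexp (-(w * Real.cos θ))‖ = Real.exp (-(w.re * Real.cos θ)) := by
    rw [norm_exp, neg_re, re_mul_ofReal]
  have hreal : cosLaplace w.re = (∫ θ in Ioo 0 (π / 2), Real.exp (-(w.re * Real.cos θ)) : ℝ) := by
    rw [cosLaplace, ← integral_complex_ofReal]
    push_cast
    rfl
  simp only [hnorm]
  rw [hreal, norm_real, Real.norm_of_nonneg (integral_nonneg fun θ => (Real.exp_pos _).le)]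

lemma integrable_prod_cos_mul_exp_neg {z : ℂ} (hz : 0 < z.re) (τ : ℝ) :
    Integrable (fun p : ℝ × ℝ =>
        (Real.cos (τ * p.1) : ℂ) * cexp (-(2 * z * Real.cosh p.1 * Real.cos p.2)))
      ((volume.restrict (Ioi 0)).prod (volume.restrict (Ioo 0 (π / 2)))) := by
  refine (integrable_prod_iff (Continuous.aestronglyMeasurable (by fun_prop))).2
    ⟨ae_of_all _ fun t => ?_, ?_⟩
  · exact (Continuous.integrableOn_Icc (by fun_prop)).mono_set Ioo_subset_Icc_self
  have hre (t : ℝ) : (2 * z * Real.cosh t).re = 2 * z.re * Real.cosh t := by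
    rw [re_mul_ofReal, ← ofReal_ofNat, re_ofReal_mul]
  have hdecay := (integrableOn_cos_mul_cosLaplace_mul_cosh (z := z.re) (by simpa using hz.le)
    (ofReal_ne_zero.2 hz.ne') τ).norm
  refine hdecay.congr (ae_of_all _ fun t => ?_)
  simp only [norm_mul, integral_const_mul, integral_norm_exp_neg_mul_cos, hre]
  push_cast
  rfl

lemma integral_cos_mul_cosLaplace_mul_cosh_swap {z : ℂ} (hz : 0 < z.re) (τ : ℝ) :
    ∫ t in Ioi (0 : ℝ), (Real.cos (τ * t) : ℂ) * cosLaplace (2 * z * Real.cosh t) =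
      ∫ θ in Ioo 0 (π / 2), ∫ t in Ioi (0 : ℝ),
        cosh (τ * I * t) * cexp (-(2 * (z * Real.cos θ) * Real.cosh t)) := by
  simp only [cosLaplace, ← integral_const_mul]
  rw [integral_integral_swap (integrable_prod_cos_mul_exp_neg hz τ)]
  congr with θ
  congr with t
  rw [mul_right_comm (τ : ℂ) I, cosh_mul_I, ofReal_cos, ofReal_mul]
  ring_nf

lemma mul_I_ne_intCast {τ : ℝ} (hτ : τ ≠ 0) (n : ℤ) : τ * I ≠ n := fun h =>
  hτ (by simpa using congrArg im h)

lemma integral_cos_mul_cosLaplace_mul_cosh_of_re_pos {z : ℂ} (hz : 0 < z.re) {τ : ℝ}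
    (hτ : τ ≠ 0) :
    ∫ t in Ioi (0 : ℝ), (Real.cos (τ * t) : ℂ) * cosLaplace (2 * z * Real.cosh t) =
      π ^ 2 / (4 * sin (π * (τ * I))) * (besselIExp (-(τ * I) / 2) (log z - Real.log 2) ^ 2 -
        besselIExp (τ * I / 2) (log z - Real.log 2) ^ 2) := by
  have hz₀ : z ≠ 0 := fun h => by simp [h] at hz
  have hinner (θ : ℝ) (hθ : θ ∈ Ioo 0 (π / 2)) :
      ∫ t in Ioi (0 : ℝ), cosh (τ * I * t) * cexp (-(2 * (z * Real.cos θ) * Real.cosh t)) =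
        π / (2 * sin (π * (τ * I))) * (besselIExp (-(τ * I)) (log z + Real.log (Real.cos θ)) -
          besselIExp (τ * I) (log z + Real.log (Real.cos θ))) := by
    have hcos := cos_pos_of_mem_Ioo_zero_pi_div_two hθ
    rw [integral_cosh_mul_exp_neg_mul_cosh (mul_I_ne_intCast hτ)
      (by rw [re_mul_ofReal]; exact mul_pos hz hcos), log_mul_ofReal _ hcos _ hz₀,
      add_comm (log z)]
  have hre : 0 ≤ (-(τ * I)).re ∧ 0 ≤ (τ * I).re := by simp
  rw [integral_cos_mul_cosLaplace_mul_cosh_swap hz, setIntegral_congr_fun measurableSet_Ioo hinner,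
    integral_const_mul, integral_sub (integrableOn_besselIExp_add_log_cos hre.1 _)
      (integrableOn_besselIExp_add_log_cos hre.2 _),
    integral_besselIExp_add_log_cos hre.1, integral_besselIExp_add_log_cos hre.2]
  ring

lemma norm_le_norm_add_ofReal {z : ℂ} (hz : 0 ≤ z.re) {δ : ℝ} (hδ : 0 ≤ δ) : ‖z‖ ≤ ‖z + δ‖ := by
  rw [norm_def, norm_def]
  apply Real.sqrt_le_sqrt
  simp only [normSq_apply, add_re, add_im, ofReal_re, ofReal_im, add_zero]
  nlinarith [mul_nonneg hz hδ]

lemma tendsto_integral_cos_mul_cosLaplace_mul_cosh {z : ℂ} (hz : 0 ≤ z.re) (hz₀ : z ≠ 0)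
    (τ : ℝ) :
    Tendsto (fun δ : ℝ => ∫ t in Ioi (0 : ℝ),
        (Real.cos (τ * t) : ℂ) * cosLaplace (2 * (z + δ) * Real.cosh t)) (𝓝[>] 0)
      (𝓝 (∫ t in Ioi (0 : ℝ), (Real.cos (τ * t) : ℂ) * cosLaplace (2 * z * Real.cosh t))) := by
  refine tendsto_integral_filter_of_dominated_convergence
    (fun t => (1 + π) / √‖z‖ * Real.exp (-(1 / 2) * t))
    (.of_forall fun δ => (continuous_cos_mul_cosLaplace_mul_cosh _ τ).aestronglyMeasurable)
    ?_ (integrableOn_exp_neg_half_mul _) (ae_of_all _ fun t => ?_)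
  · filter_upwards [self_mem_nhdsWithin] with δ hδ
    have hre : 0 ≤ (z + δ).re := add_nonneg hz (le_of_lt hδ)
    have hnorm : ‖z‖ ≤ ‖z + δ‖ := norm_le_norm_add_ofReal hz (le_of_lt hδ)
    have hz' : 0 < ‖z‖ := norm_pos_iff.2 hz₀
    refine ae_of_all _ fun t => (norm_cos_mul_cosLaplace_mul_cosh_le hre
      (norm_pos_iff.1 (hz'.trans_le hnorm)) τ t).trans ?_
    gcongr
  · have hcont : Continuous fun δ : ℝ =>
        (Real.cos (τ * t) : ℂ) * cosLaplace (2 * (z + δ) * Real.cosh t) := by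
      have := continuous_cosLaplace
      fun_prop
    simpa using hcont.continuousWithinAt (s := Ioi 0) (x := 0) |>.tendsto

lemma integral_cos_mul_cosLaplace_mul_cosh {z : ℂ} (hz : 0 ≤ z.re) (hz₀ : z ≠ 0) {τ : ℝ}
    (hτ : τ ≠ 0) :
    ∫ t in Ioi (0 : ℝ), (Real.cos (τ * t) : ℂ) * cosLaplace (2 * z * Real.cosh t) =
      π ^ 2 / (4 * sin (π * (τ * I))) * (besselIExp (-(τ * I) / 2) (log z - Real.log 2) ^ 2 -
        besselIExp (τ * I / 2) (log z - Real.log 2) ^ 2) := by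
  have hslit : z ∈ slitPlane := by
    refine hz.lt_or_eq.imp id fun hre him => hz₀ (Complex.ext hre.symm him)
  have hlog : Tendsto (fun δ : ℝ => log (z + δ) - Real.log 2) (𝓝[>] 0)
      (𝓝 (log z - Real.log 2)) := by
    have hadd : Tendsto (fun δ : ℝ => z + δ) (𝓝[>] 0) (𝓝 z) := by
      have hcont : Continuous fun δ : ℝ => z + δ := by fun_prop
      simpa using hcont.continuousWithinAt (s := Ioi 0) (x := 0) |>.tendsto
    exact (hadd.clog hslit).sub_const _
  have hbessel {ν : ℂ} (hν : ν.re = 0) :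
      Tendsto (fun δ : ℝ => besselIExp ν (log (z + δ) - Real.log 2) ^ 2) (𝓝[>] 0)
        (𝓝 (besselIExp ν (log z - Real.log 2) ^ 2)) :=
    (((continuous_besselIExp hν.ge).tendsto _).comp hlog).pow 2
  refine tendsto_nhds_unique ((tendsto_integral_cos_mul_cosLaplace_mul_cosh hz hz₀ τ).congr' ?_)
    (((hbessel (ν := -(τ * I) / 2) (by simp)).sub
      (hbessel (ν := τ * I / 2) (by simp))).const_mul _)
  filter_upwards [self_mem_nhdsWithin] with δ hδ
  exact integral_cos_mul_cosLaplace_mul_cosh_of_re_pos (add_pos_of_nonneg_of_pos hz hδ) hτ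

lemma besselIExp_sub_pi_div_two_mul_I (ν : ℂ) (x : ℝ) :
    besselIExp ν (Real.log (x / 2) - π / 2 * I) = cexp (-(π / 2 * I * ν)) * besselJ ν x := by
  rw [besselIExp, besselJ, ← tsum_mul_left]
  congr with k
  have hexp : cexp ((ν + 2 * k) * (Real.log (x / 2) - π / 2 * I)) =
      cexp (-(π / 2 * I * ν)) * ((-1) ^ k * cexp ((ν + 2 * k) * Real.log (x / 2))) := by
    rw [← exp_neg_pi_mul_I, ← exp_nat_mul, ← exp_add, ← exp_add]
    ring_nf
  rw [hexp, mul_div_assoc]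

lemma log_neg_ofReal_mul_I_sub_log_two {x : ℝ} (hx : 0 < x) :
    log (-(x * I)) - Real.log 2 = Real.log (x / 2) - π / 2 * I := by
  rw [← mul_neg, log_ofReal_mul hx (neg_ne_zero.2 I_ne_zero), log_neg_I,
    Real.log_div hx.ne' two_ne_zero]
  push_cast
  ring

lemma besselJ_conj (ν : ℂ) (x : ℝ) : besselJ (conj ν) x = conj (besselJ ν x) := by
  rw [besselJ, besselJ, conj_tsum]
  congr with k
  simp only [map_div₀, map_mul, map_pow, map_neg, map_one, ← exp_conj, ← Gamma_conj, map_add,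
    conj_ofReal, map_natCast, map_ofNat]

lemma besselIExp_sq_sub_besselIExp_sq (x τ : ℝ) :
    besselIExp (-(τ * I) / 2) (Real.log (x / 2) - π / 2 * I) ^ 2 -
        besselIExp (τ * I / 2) (Real.log (x / 2) - π / 2 * I) ^ 2 =
      Real.exp (-(π * τ / 2)) * conj (besselJ (I * τ / 2) x ^ 2) -
        Real.exp (π * τ / 2) * besselJ (I * τ / 2) x ^ 2 := by
  have hneg : 2 * -(π / 2 * I * (-(I * τ) / 2)) = -(π * τ / 2) := by
    linear_combination (π * τ / 2) * I_mul_I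
  have hpos : 2 * -(π / 2 * I * (I * τ / 2)) = π * τ / 2 := by
    linear_combination (-(π * τ / 2)) * I_mul_I
  have hconj : -(τ * I) / 2 = conj (I * τ / 2) := by simp [mul_comm I, conj_ofNat]
  rw [besselIExp_sub_pi_div_two_mul_I, besselIExp_sub_pi_div_two_mul_I, mul_pow, mul_pow,
    ← exp_nat_mul, ← exp_nat_mul, hconj, besselJ_conj, ← hconj, mul_comm (τ : ℂ) I, map_pow]
  push_cast
  rw [hneg, hpos]

lemma im_div_sin_mul_sub (A : ℂ) {τ : ℝ} (hτ : τ ≠ 0) :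
    (π ^ 2 / (4 * sin (π * (τ * I))) *
        (Real.exp (-(π * τ / 2)) * conj A - Real.exp (π * τ / 2) * A)).im =
      π ^ 2 / 4 * (A.re / Real.cosh (π * τ / 2)) := by
  have hsinh : Real.sinh (π * τ) = 2 * Real.sinh (π * τ / 2) * Real.cosh (π * τ / 2) := by
    rw [← Real.sinh_two_mul, mul_div_cancel₀ _ two_ne_zero]
  have hsinh_ne : Real.sinh (π * τ / 2) ≠ 0 :=
    Real.sinh_ne_zero.2 (div_ne_zero (mul_ne_zero Real.pi_ne_zero hτ) two_ne_zero)
  have hcosh_ne := (Real.cosh_pos (π * τ / 2)).ne'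
  have hcoeff : (π ^ 2 / (4 * sin (π * (τ * I))) : ℂ) =
      (π ^ 2 / (4 * Real.sinh (π * τ)) : ℝ) * -I := by
    rw [← mul_assoc, sin_mul_I, ← inv_I]
    push_cast
    field_simp
  rw [hcoeff, mul_assoc, im_ofReal_mul, hsinh]
  simp only [mul_im, neg_re, neg_im, I_re, I_im, sub_re, re_ofReal_mul, conj_re]
  have hexp : Real.exp (π * τ / 2) - Real.exp (-(π * τ / 2)) = 2 * Real.sinh (π * τ / 2) := by
    rw [Real.sinh_eq]
    ring
  field_simp
  linear_combination A.re * hexp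

lemma im_cosLaplace_neg_mul_I {w : ℝ} (hw : 0 < w) :
    (cosLaplace (-(w * I))).im = π / 2 * struveH0 w := by
  have hint : IntegrableOn (fun θ : ℝ => cexp (-(-(w * I) * Real.cos θ))) (Ioo 0 (π / 2)) :=
    (Continuous.integrableOn_Icc (by fun_prop)).mono_set Ioo_subset_Icc_self
  rw [pi_div_two_mul_struveH0_eq_integral_sin hw, intervalIntegral.integral_of_le (by positivity),
    integral_Ioc_eq_integral_Ioo, cosLaplace, ← imCLM_apply, ← imCLM.integral_comp_comm hint]
  congr with θ
  rw [imCLM_apply, neg_mul, neg_neg, mul_right_comm, ← ofReal_mul, exp_ofReal_mul_I_im]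

lemma im_cos_mul_cosLaplace_mul_cosh {x : ℝ} (hx : 0 < x) (τ t : ℝ) :
    ((Real.cos (τ * t) : ℂ) * cosLaplace (2 * -(x * I) * Real.cosh t)).im =
      π / 2 * (Real.cos (τ * t) * struveH0 (2 * x * Real.cosh t)) := by
  have := Real.cosh_pos t
  have harg : 2 * -(x * I) * Real.cosh t = -((2 * x * Real.cosh t : ℝ) * I) := by
    push_cast
    ring
  rw [im_ofReal_mul, harg, im_cosLaplace_neg_mul_I (by positivity), mul_left_comm]

lemma neg_ofReal_mul_I_re_nonneg_and_ne_zero {x : ℝ} (hx : 0 < x) :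
    0 ≤ (-(x * I)).re ∧ -(x * I) ≠ 0 := by
  simp [hx.ne']

lemma integrableOn_cos_mul_struveH0 {x : ℝ} (hx : 0 < x) (τ : ℝ) :
    IntegrableOn (fun t => Real.cos (τ * t) * struveH0 (2 * x * Real.cosh t)) (Ioi 0) := by
  obtain ⟨hre, hne⟩ := neg_ofReal_mul_I_re_nonneg_and_ne_zero hx
  have hint := (integrableOn_cos_mul_cosLaplace_mul_cosh hre hne τ).im.const_mul (2 / π)
  refine hint.congr (ae_of_all _ fun t => ?_)
  simp only [RCLike.im_to_complex, im_cos_mul_cosLaplace_mul_cosh hx]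
  field_simp

lemma re_besselJ_sq_div_cosh_of_ne_zero {x : ℝ} (hx : 0 < x) {τ : ℝ} (hτ : τ ≠ 0) :
    (besselJ (I * τ / 2) x ^ 2).re / Real.cosh (π * τ / 2) =
      2 / π * ∫ t in Ioi (0 : ℝ), Real.cos (τ * t) * struveH0 (2 * x * Real.cosh t) := by
  obtain ⟨hre, hne⟩ := neg_ofReal_mul_I_re_nonneg_and_ne_zero hx
  have him : (∫ t in Ioi (0 : ℝ),
        (Real.cos (τ * t) : ℂ) * cosLaplace (2 * -(x * I) * Real.cosh t)).im =
      π / 2 * ∫ t in Ioi (0 : ℝ), Real.cos (τ * t) * struveH0 (2 * x * Real.cosh t) := by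
    rw [← imCLM_apply, ← imCLM.integral_comp_comm
      (integrableOn_cos_mul_cosLaplace_mul_cosh hre hne τ), ← integral_const_mul]
    simp only [imCLM_apply, im_cos_mul_cosLaplace_mul_cosh hx]
  rw [integral_cos_mul_cosLaplace_mul_cosh hre hne hτ, log_neg_ofReal_mul_I_sub_log_two hx,
    besselIExp_sq_sub_besselIExp_sq, im_div_sin_mul_sub _ hτ] at him
  field_simp at him ⊢
  linarith

lemma continuous_integral_cos_mul {f : ℝ → ℝ} (hf : IntegrableOn f (Ioi 0)) :
    Continuous fun τ : ℝ => ∫ t in Ioi (0 : ℝ), Real.cos (τ * t) * f t := by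
  refine continuous_of_dominated (bound := fun t => ‖f t‖) (fun τ => ?_)
    (fun τ => ae_of_all _ fun t => ?_) hf.norm (ae_of_all _ fun t => by fun_prop)
  · exact (Continuous.aestronglyMeasurable (by fun_prop)).mul hf.aestronglyMeasurable
  · rw [norm_mul]
    exact mul_le_of_le_one_left (norm_nonneg _) (Real.abs_cos_le_one _)

lemma continuous_besselJ_I_mul_div_two (x : ℝ) :
    Continuous fun τ : ℝ => besselJ (I * τ / 2) x := by
  have heq (τ : ℝ) : besselJ (I * τ / 2) x = cexp (π / 2 * I * (I * τ / 2)) *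
      besselIExp (I * τ / 2) (Real.log (x / 2) - π / 2 * I) := by
    rw [besselIExp_sub_pi_div_two_mul_I, ← mul_assoc, ← exp_add, add_neg_cancel, exp_zero, one_mul]
  simp only [heq]
  have hbessel : Continuous fun τ : ℝ =>
      besselIExp (I * τ / 2) (Real.log (x / 2) - π / 2 * I) :=
    continuousOn_besselIExp.comp_continuous
      (f := fun τ : ℝ => ((I * τ / 2, Real.log (x / 2) - π / 2 * I) : ℂ × ℂ))
      (by fun_prop) fun τ => by simp
  fun_prop

theorem statement7_general (x : ℝ) (hx : 0 < x) (τ : ℝ) :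
    IntegrableOn (fun t => Real.cos (τ * t) * struveH0 (2 * x * Real.cosh t)) (Ioi 0) ∧
      (besselJ (I * τ / 2) x ^ 2).re / Real.cosh (π * τ / 2) =
        2 / π * ∫ t in Ioi (0 : ℝ), Real.cos (τ * t) * struveH0 (2 * x * Real.cosh t) := by
  refine ⟨integrableOn_cos_mul_struveH0 hx τ, ?_⟩
  have hstruve : IntegrableOn (fun t => struveH0 (2 * x * Real.cosh t)) (Ioi 0) := by
    simpa using integrableOn_cos_mul_struveH0 hx 0
  have hright := (continuous_integral_cos_mul hstruve).const_mul (2 / π)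
  have hleft : Continuous fun τ : ℝ =>
      (besselJ (I * τ / 2) x ^ 2).re / Real.cosh (π * τ / 2) :=
    (continuous_re.comp ((continuous_besselJ_I_mul_div_two x).pow 2)).div (by fun_prop)
      fun τ => (Real.cosh_pos _).ne'
  -- The computation divides by `sin (π τ i)`, so `τ = 0` is reached by continuity.
  exact congrFun (hleft.ext_on (dense_compl_singleton 0) hright
    fun τ hτ => re_besselJ_sq_div_cosh_of_ne_zero hx hτ) τ

end

theorem statement7 (x : ℝ) (hx : 0 < x) (n : ℕ) (hn : 1 ≤ n) :
    IntegrableOn (fun t : ℝ => Real.cos (n * t) * struveH0 (2 * x * Real.cosh t))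
      (Set.Ioi (0 : ℝ)) ∧
    ((besselJ (Complex.I * n / 2) x) ^ 2).re / Real.cosh (Real.pi * n / 2)
      = (2 / Real.pi) * ∫ t in Set.Ioi (0 : ℝ),
          Real.cos (n * t) * struveH0 (2 * x * Real.cosh t) := by
  simpa only [Complex.ofReal_natCast] using statement7_general x hx n
end

section
/- Let M ≥ 0 be a constant such that √u · |Y₀(u)| ≤ M for all u > 0. Then for every x > 0 and every n ∈ ℕ, n ≥ 1, |Re[J_{in/2}(x)²]| / cosh(πn/2) ≤ (1/2) · ( J₀(x)² + Y₀(x)² + Γ(1/4)² · M / (π·√(πx)) ). -/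
open MeasureTheory Filter Topology

/-! For real `τ` and `s = log (x / 2)`, the function `F s = J_{iτ}(2 eˢ)` solves `F'' = -q F` with
the increasing potential `q = τ² + 4 e²ˢ`. For a unit constant `c`, the Sonin energy `f² + f'² / q`
of `f = Re (c F)` is therefore antitone, so it stays below its limit at `s → -∞`, which is at most
`‖Γ(iτ + 1)‖⁻² = sinh (π τ) / (π τ)`. The decay `x ^ (-1/2)` comes from the damped function
`e^{s/4} f`, a solution of `φ'' = φ' / 2 - (q + 1/16) φ`: the energy of this equation is antitone as
soon as `τ² + 1/16 ≤ 4 e²ˢ`, and near that point it is controlled by the undamped one. Choosing `c`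
so that `c F s = ‖F s‖` bounds the whole modulus, and gives
`‖J_{iτ}(x)‖² / cosh (π τ) ≤ 21 / (10 π √x)` when `τ ≥ 1/2`.

The term in `M` alone exceeds this, since `M ≥ √2 |Y₀(2)|`: the alternating series of `J₀(2)` and
`Y₀(2)` give `Y₀(2) ≥ 3 / (2 π)`, and the reflection formula together with `Γ(7/4) ≤ 1` gives
`Γ(1/4) ≥ 3 √2 π / 4`.
-/

section Sonin

/-- Sonin's energy of a solution `f` of `f'' = a f' - q f` with derivative `g`. -/
noncomputable def soninEnergy (f g q : ℝ → ℝ) (s : ℝ) : ℝ :=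
  f s ^ 2 + g s ^ 2 / q s

variable {f g q r : ℝ → ℝ} {a s : ℝ}

lemma sq_le_soninEnergy (hq : 0 ≤ q s) : f s ^ 2 ≤ soninEnergy f g q s :=
  le_add_of_nonneg_right (by positivity)

lemma hasDerivAt_soninEnergy (hf : HasDerivAt f (g s) s)
    (hg : HasDerivAt g (a * g s - q s * f s) s) (hq : HasDerivAt q (r s) s) (hs : q s ≠ 0) :
    HasDerivAt (soninEnergy f g q) (g s ^ 2 * (2 * a * q s - r s) / q s ^ 2) s := by
  refine ((hf.pow 2).add ((hg.pow 2).div hq hs)).congr_deriv ?_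
  simp only [Pi.pow_apply]
  field_simp
  ring

lemma antitoneOn_soninEnergy {D : Set ℝ} (hD : Convex ℝ D)
    (hf : ∀ s ∈ D, HasDerivAt f (g s) s) (hg : ∀ s ∈ D, HasDerivAt g (a * g s - q s * f s) s)
    (hq : ∀ s ∈ D, HasDerivAt q (r s) s) (hpos : ∀ s ∈ D, 0 < q s)
    (hle : ∀ s ∈ D, 2 * a * q s ≤ r s) : AntitoneOn (soninEnergy f g q) D := by
  have hderiv (s : ℝ) (hs : s ∈ D) :=
    hasDerivAt_soninEnergy (hf s hs) (hg s hs) (hq s hs) (hpos s hs).ne'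
  refine antitoneOn_of_hasDerivWithinAt_nonpos hD
    (fun s hs ↦ (hderiv s hs).continuousAt.continuousWithinAt)
    (fun s hs ↦ (hderiv s (interior_subset hs)).hasDerivWithinAt) fun s hs ↦ ?_
  exact div_nonpos_of_nonpos_of_nonneg (mul_nonpos_of_nonneg_of_nonpos (sq_nonneg _)
    (sub_nonpos.2 (hle s (interior_subset hs)))) (sq_nonneg _)

end Sonin

section RealSolutions

/-- The coefficient `q` of the equation `f'' = -q f` satisfied by `s ↦ J_{iτ}(2 eˢ)`. -/
noncomputable def logBesselPotential (τ s : ℝ) : ℝ :=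
  τ ^ 2 + 4 * Real.exp (2 * s)

variable {τ : ℝ}

lemma logBesselPotential_pos (τ s : ℝ) : 0 < logBesselPotential τ s := by
  unfold logBesselPotential
  positivity

lemma hasDerivAt_logBesselPotential (τ s : ℝ) :
    HasDerivAt (logBesselPotential τ) (8 * Real.exp (2 * s)) s := by
  have h : HasDerivAt (fun s : ℝ ↦ Real.exp (2 * s)) (Real.exp (2 * s) * (2 * 1)) s :=
    ((hasDerivAt_id s).const_mul 2).exp
  exact ((h.const_mul 4).const_add (τ ^ 2)).congr_deriv (by ring)

lemma sq_add_shift_sq_div_le {q : ℝ} (hq : 9 / 16 ≤ q) (a b : ℝ) :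
    a ^ 2 + (b + a / 4) ^ 2 / (q + 1 / 16) ≤ 7 / 5 * (a ^ 2 + b ^ 2 / q) := by
  have hshift : (b + a / 4) ^ 2 ≤ 7 / 5 * b ^ 2 + 7 / 32 * a ^ 2 := by
    linarith [sq_nonneg (b - 5 / 8 * a)]
  calc a ^ 2 + (b + a / 4) ^ 2 / (q + 1 / 16)
      ≤ a ^ 2 + (7 / 5 * b ^ 2 + 7 / 32 * a ^ 2) / (q + 1 / 16) := by gcongr
    _ = a ^ 2 + 7 / 5 * (b ^ 2 / (q + 1 / 16)) + 7 / 32 * a ^ 2 / (q + 1 / 16) := by ring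
    _ ≤ a ^ 2 + 7 / 5 * (b ^ 2 / q) + 7 / 32 * a ^ 2 / (5 / 8) := by
      gcongr <;> linarith
    _ ≤ 7 / 5 * (a ^ 2 + b ^ 2 / q) := by linarith [sq_nonneg a]

variable {f g : ℝ → ℝ}

lemma antitone_soninEnergy_logBesselPotential (hf : ∀ s, HasDerivAt f (g s) s)
    (hg : ∀ s, HasDerivAt g (-logBesselPotential τ s * f s) s) :
    Antitone (soninEnergy f g (logBesselPotential τ)) := by
  refine antitoneOn_univ.1 <| antitoneOn_soninEnergy (a := 0) convex_univ (fun s _ ↦ hf s)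
    (fun s _ ↦ (hg s).congr_deriv (by ring)) (fun s _ ↦ hasDerivAt_logBesselPotential τ s)
    (fun s _ ↦ logBesselPotential_pos τ s) fun s _ ↦ ?_
  rw [mul_zero, zero_mul]
  positivity

-- This is the Sonin energy of the damped function `e^{s/4} f`.
lemma antitoneOn_exp_half_mul_shifted_energy (hf : ∀ s, HasDerivAt f (g s) s)
    (hg : ∀ s, HasDerivAt g (-logBesselPotential τ s * f s) s) {s₀ : ℝ}
    (hs₀ : τ ^ 2 + 1 / 16 ≤ 4 * Real.exp (2 * s₀)) :
    AntitoneOn (fun s ↦ Real.exp (s / 2) *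
      (f s ^ 2 + (g s + f s / 4) ^ 2 / (logBesselPotential τ s + 1 / 16))) (Set.Ici s₀) := by
  have hexp (s : ℝ) : HasDerivAt (fun s : ℝ ↦ Real.exp (s / 4)) (Real.exp (s / 4) * (1 / 4)) s :=
    ((hasDerivAt_id s).div_const 4).exp
  have hanti : AntitoneOn (soninEnergy (fun s ↦ Real.exp (s / 4) * f s)
      (fun s ↦ Real.exp (s / 4) * (g s + f s / 4)) fun s ↦ logBesselPotential τ s + 1 / 16)
      (Set.Ici s₀) := by
    refine antitoneOn_soninEnergy (a := 1 / 2) (convex_Ici s₀)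
      (fun s _ ↦ ((hexp s).mul (hf s)).congr_deriv (by ring))
      (fun s _ ↦ ((hexp s).mul ((hg s).add ((hf s).div_const 4))).congr_deriv ?_)
      (fun s _ ↦ (hasDerivAt_logBesselPotential τ s).add_const (1 / 16))
      (fun s _ ↦ by linarith [logBesselPotential_pos τ s]) fun s hs ↦ ?_
    · simp only [Pi.add_apply]
      ring
    · have : Real.exp (2 * s₀) ≤ Real.exp (2 * s) := by gcongr; exact hs
      unfold logBesselPotential
      linarith
  refine hanti.congr fun s _ ↦ ?_
  have hsq : Real.exp (s / 2) = Real.exp (s / 4) ^ 2 := by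
    rw [← Real.exp_nat_mul]
    ring_nf
  simp only [soninEnergy, hsq]
  ring

lemma exp_half_mul_sq_le_of_le (hτ : 1 / 2 ≤ τ) (hf : ∀ s, HasDerivAt f (g s) s)
    (hg : ∀ s, HasDerivAt g (-logBesselPotential τ s * f s) s) {s₀ s : ℝ}
    (hs₀ : τ ^ 2 + 1 / 16 ≤ 4 * Real.exp (2 * s₀)) (hs : s₀ ≤ s) :
    Real.exp (s / 2) * f s ^ 2
      ≤ 7 / 5 * Real.exp (s₀ / 2) * soninEnergy f g (logBesselPotential τ) s₀ := by
  have hq : 9 / 16 ≤ logBesselPotential τ s₀ := by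
    unfold logBesselPotential
    nlinarith
  have hpos := logBesselPotential_pos τ s
  calc Real.exp (s / 2) * f s ^ 2
      ≤ Real.exp (s / 2) *
          (f s ^ 2 + (g s + f s / 4) ^ 2 / (logBesselPotential τ s + 1 / 16)) := by
        gcongr
        exact le_add_of_nonneg_right (by positivity)
    _ ≤ Real.exp (s₀ / 2) *
          (f s₀ ^ 2 + (g s₀ + f s₀ / 4) ^ 2 / (logBesselPotential τ s₀ + 1 / 16)) :=
        antitoneOn_exp_half_mul_shifted_energy hf hg hs₀ Set.self_mem_Ici hs hs
    _ ≤ Real.exp (s₀ / 2) * (7 / 5 * soninEnergy f g (logBesselPotential τ) s₀) := by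
        gcongr
        exact sq_add_shift_sq_div_le hq _ _
    _ = 7 / 5 * Real.exp (s₀ / 2) * soninEnergy f g (logBesselPotential τ) s₀ := by ring

lemma exp_half_mul_sq_le (hτ : 1 / 2 ≤ τ) (hf : ∀ s, HasDerivAt f (g s) s)
    (hg : ∀ s, HasDerivAt g (-logBesselPotential τ s * f s) s) {K : ℝ}
    (hK : ∀ s, soninEnergy f g (logBesselPotential τ) s ≤ K) (s : ℝ) :
    Real.exp (s / 2) * f s ^ 2 ≤ 21 / 20 * √τ * K := by
  have hfK : f s ^ 2 ≤ K := (sq_le_soninEnergy (logBesselPotential_pos τ s).le).trans (hK s)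
  -- `9 / 16` is a rational square for which `τ ^ 2 + 1 / 16 ≤ 4 * (9 * τ / 16) ^ 2`.
  set s₀ : ℝ := Real.log (9 / 16 * τ)
  have hexp : Real.exp s₀ = 9 / 16 * τ := Real.exp_log (by linarith)
  have hexp_half : Real.exp (s₀ / 2) = 3 / 4 * √τ := by
    rw [Real.exp_half, hexp, show (9 / 16 : ℝ) = (3 / 4) ^ 2 by norm_num,
      Real.sqrt_mul (by positivity), Real.sqrt_sq (by norm_num)]
  have hs₀ : τ ^ 2 + 1 / 16 ≤ 4 * Real.exp (2 * s₀) := by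
    rw [two_mul, Real.exp_add, hexp]
    nlinarith
  suffices Real.exp (s / 2) * f s ^ 2 ≤ 7 / 5 * Real.exp (s₀ / 2) * K by
    rw [hexp_half] at this
    linarith
  rcases le_total s s₀ with h | h
  · gcongr
    calc Real.exp (s / 2) ≤ 1 * Real.exp (s₀ / 2) := by rw [one_mul]; gcongr
      _ ≤ 7 / 5 * Real.exp (s₀ / 2) := by gcongr; norm_num
  · refine (exp_half_mul_sq_le_of_le hτ hf hg hs₀ h).trans ?_
    gcongr
    exact hK s₀

end RealSolutions

section BesselClifford

/-- The term of index `k` of the power series of the Bessel–Clifford function. -/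
noncomputable def besselCliffordTerm (ν z : ℂ) (k : ℕ) : ℂ :=
  z ^ k / (k.factorial * Complex.Gamma (ν + k + 1))

/-- The Bessel–Clifford function, through which `J_ν(x) = (x / 2) ^ ν * C_ν(-(x / 2) ^ 2)`. It is
entire in both arguments: `Complex.Gamma` vanishes at its poles, so the corresponding terms are
zero. -/
noncomputable def besselClifford (ν z : ℂ) : ℂ :=
  ∑' k, besselCliffordTerm ν z k

lemma besselCliffordTerm_eq_mul_term_add_one (ν z : ℂ) (k : ℕ) :
    besselCliffordTerm ν z k = (ν + k + 1) * besselCliffordTerm (ν + 1) z k := by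
  have h := Complex.one_div_Gamma_eq_self_mul_one_div_Gamma_add_one (ν + k + 1)
  rw [besselCliffordTerm, besselCliffordTerm, div_mul_eq_div_mul_one_div, one_div, h,
    show ν + 1 + k + 1 = ν + k + 1 + 1 by ring]
  ring

lemma succ_mul_besselCliffordTerm_succ (ν z : ℂ) (k : ℕ) :
    (k + 1) * besselCliffordTerm ν z (k + 1) = z * besselCliffordTerm (ν + 1) z k := by
  have hk : (k : ℂ) + 1 ≠ 0 := k.cast_add_one_ne_zero
  rw [besselCliffordTerm, besselCliffordTerm, Nat.factorial_succ, Nat.cast_mul, Nat.cast_succ,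
    show ν + (k + 1 : ℂ) + 1 = ν + 1 + k + 1 by ring, pow_succ, mul_div_assoc', mul_assoc,
    mul_div_mul_left _ _ hk]
  ring

lemma summable_besselCliffordTerm (ν z : ℂ) : Summable (besselCliffordTerm ν z) := by
  refine summable_of_ratio_norm_eventually_le one_half_lt_one ?_
  filter_upwards [eventually_ge_atTop ⌈‖ν‖ + 2 * ‖z‖⌉₊] with k hk
  have hk' : ‖ν‖ + 2 * ‖z‖ ≤ k := Nat.ceil_le.1 hk
  have hrec : (k + 1 : ℕ) * (ν + (k + 1 : ℕ)) * besselCliffordTerm ν z (k + 1)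
      = z * besselCliffordTerm ν z k := by
    rw [besselCliffordTerm_eq_mul_term_add_one ν z k]
    push_cast
    linear_combination (ν + k + 1) * succ_mul_besselCliffordTerm_succ ν z k
  have hfactor : 1 + 2 * ‖z‖ ≤ ‖ν + (k + 1 : ℕ)‖ := by
    have := norm_sub_le (ν + (k + 1 : ℕ)) ν
    rw [add_sub_cancel_left, Complex.norm_natCast, Nat.cast_succ] at this
    linarith
  have hnorm := congrArg norm hrec
  rw [norm_mul, norm_mul, norm_mul, Complex.norm_natCast, Nat.cast_succ] at hnorm
  have hlower : (1 + 2 * ‖z‖) * ‖besselCliffordTerm ν z (k + 1)‖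
      ≤ ‖z‖ * ‖besselCliffordTerm ν z k‖ := by
    rw [← hnorm]
    gcongr
    nlinarith [norm_nonneg z]
  refine le_of_mul_le_mul_left (hlower.trans ?_) (by positivity : 0 < 1 + 2 * ‖z‖)
  nlinarith [norm_nonneg (besselCliffordTerm ν z k)]

lemma hasDerivAt_besselCliffordTerm_succ (ν z : ℂ) (k : ℕ) :
    HasDerivAt (fun w ↦ besselCliffordTerm ν w (k + 1)) (besselCliffordTerm (ν + 1) z k) z := by
  refine ((hasDerivAt_pow (k + 1) z).div_const _).congr_deriv ?_
  rw [besselCliffordTerm, Nat.factorial_succ, Nat.cast_mul, Nat.cast_succ,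
    show ν + (k + 1 : ℂ) + 1 = ν + 1 + k + 1 by ring, mul_assoc, Nat.add_sub_cancel,
    mul_div_mul_left _ _ k.cast_add_one_ne_zero]

lemma hasDerivAt_besselClifford (ν z : ℂ) :
    HasDerivAt (besselClifford ν) (besselClifford (ν + 1) z) z := by
  set R : ℝ := ‖z‖ + 1
  have hsum : Summable fun k ↦ ‖besselCliffordTerm ν R k‖ :=
    (summable_besselCliffordTerm ν R).norm
  have hdiff (k : ℕ) : DifferentiableOn ℂ (fun w ↦ besselCliffordTerm ν w k) (Metric.ball 0 R) :=
    ((differentiable_pow k).div_const _).differentiableOn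
  have hle (k : ℕ) (w : ℂ) (hw : w ∈ Metric.ball 0 R) :
      ‖besselCliffordTerm ν w k‖ ≤ ‖besselCliffordTerm ν R k‖ := by
    have hwR : ‖w‖ ≤ ‖(R : ℂ)‖ := by
      rw [Complex.norm_real]
      exact (mem_ball_zero_iff.1 hw).le.trans (le_abs_self R)
    simp only [besselCliffordTerm, norm_div, norm_pow]
    gcongr
  have hz : z ∈ Metric.ball 0 R := mem_ball_zero_iff.2 (lt_add_one _)
  have hderiv := Complex.hasSum_deriv_of_summable_norm hsum hdiff Metric.isOpen_ball hle hz
  have hterm (k : ℕ) := (hasDerivAt_besselCliffordTerm_succ ν z k).deriv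
  have h0 : deriv (fun w ↦ besselCliffordTerm ν w 0) z = 0 := by
    simp only [besselCliffordTerm, pow_zero, deriv_const]
  have hdiffAt := (Complex.differentiableOn_tsum_of_summable_norm hsum hdiff Metric.isOpen_ball
    hle).differentiableAt (Metric.isOpen_ball.mem_nhds hz)
  refine hdiffAt.hasDerivAt.congr_deriv ?_
  rw [← hderiv.tsum_eq, hderiv.summable.tsum_eq_zero_add, h0, zero_add, tsum_congr hterm,
    besselClifford]

lemma besselClifford_eq_add (ν z : ℂ) :
    besselClifford ν z = (ν + 1) * besselClifford (ν + 1) z + z * besselClifford (ν + 2) z := by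
  have hterm (k : ℕ) : besselCliffordTerm ν z k
      = (ν + 1) * besselCliffordTerm (ν + 1) z k + k * besselCliffordTerm (ν + 1) z k := by
    rw [besselCliffordTerm_eq_mul_term_add_one]
    ring
  have hshift (k : ℕ) : (k + 1 : ℕ) * besselCliffordTerm (ν + 1) z (k + 1)
      = z * besselCliffordTerm (ν + 2) z k := by
    rw [Nat.cast_succ, succ_mul_besselCliffordTerm_succ, add_assoc, one_add_one_eq_two]
  have hsum : Summable fun k : ℕ ↦ k * besselCliffordTerm (ν + 1) z k := by
    rw [← summable_nat_add_iff 1]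
    exact ((summable_besselCliffordTerm (ν + 2) z).mul_left z).congr fun k ↦ (hshift k).symm
  simp only [besselClifford]
  rw [tsum_congr hterm, ((summable_besselCliffordTerm _ z).mul_left _).tsum_add hsum, tsum_mul_left,
    hsum.tsum_eq_zero_add, tsum_congr hshift, tsum_mul_left, Nat.cast_zero, zero_mul, zero_add]

lemma besselClifford_zero_right (ν : ℂ) : besselClifford ν 0 = (Complex.Gamma (ν + 1))⁻¹ := by
  rw [besselClifford, tsum_eq_single 0 fun k hk ↦ by simp [besselCliffordTerm, hk]]
  simp [besselCliffordTerm]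

end BesselClifford

section BesselJ

lemma besselJ_two_mul_exp (ν : ℂ) (s : ℝ) :
    besselJ ν (2 * Real.exp s) = Complex.exp (ν * s) * besselClifford ν (-Complex.exp s ^ 2) := by
  rw [besselJ, besselClifford, ← tsum_mul_left, mul_div_cancel_left₀ _ two_ne_zero, Real.log_exp]
  refine tsum_congr fun k ↦ ?_
  have : Complex.exp ((ν + 2 * k) * s) = Complex.exp (ν * s) * (Complex.exp s ^ 2) ^ k := by
    rw [← pow_mul, ← Complex.exp_nat_mul, ← Complex.exp_add]
    push_cast
    ring_nf
  rw [this, besselCliffordTerm, neg_pow (Complex.exp s ^ 2)]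
  ring

lemma besselJ_add_besselJ_add_two (ν : ℂ) (s : ℝ) :
    Complex.exp s * (besselJ ν (2 * Real.exp s) + besselJ (ν + 2) (2 * Real.exp s))
      = (ν + 1) * besselJ (ν + 1) (2 * Real.exp s) := by
  simp only [besselJ_two_mul_exp, add_mul, Complex.exp_add, one_mul, besselClifford_eq_add ν]
  rw [two_mul (s : ℂ), Complex.exp_add]
  ring

/-- The derivative of `s ↦ J_ν(2 eˢ)`. -/
noncomputable def besselJLogDeriv (ν : ℂ) (s : ℝ) : ℂ :=
  ν * besselJ ν (2 * Real.exp s) - 2 * Complex.exp s * besselJ (ν + 1) (2 * Real.exp s)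

lemma hasDerivAt_cexp_ofReal (s : ℝ) :
    HasDerivAt (fun s : ℝ ↦ Complex.exp s) (Complex.exp s) s :=
  (Complex.hasDerivAt_exp s).comp_ofReal

lemma hasDerivAt_besselJ_two_mul_exp (ν : ℂ) (s : ℝ) :
    HasDerivAt (fun s ↦ besselJ ν (2 * Real.exp s)) (besselJLogDeriv ν s) s := by
  have hexp : HasDerivAt (fun s : ℝ ↦ Complex.exp (ν * s)) (Complex.exp (ν * s) * ν) s := by
    simpa using! ((hasDerivAt_id (s : ℂ)).const_mul ν).cexp.comp_ofReal
  have hC := (hasDerivAt_besselClifford ν (-Complex.exp s ^ 2)).comp s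
    ((hasDerivAt_cexp_ofReal s).pow 2).neg
  simp only [besselJ_two_mul_exp]
  refine (hexp.mul hC).congr_deriv ?_
  simp only [besselJLogDeriv, besselJ_two_mul_exp, add_mul, one_mul, Complex.exp_add, Function.comp]
  simp only [Pi.neg_apply, Pi.pow_apply, Nat.cast_ofNat, Nat.add_one_sub_one, pow_one, mul_neg]
  ring

lemma hasDerivAt_besselJLogDeriv (ν : ℂ) (s : ℝ) :
    HasDerivAt (besselJLogDeriv ν)
      ((ν ^ 2 - 4 * Complex.exp s ^ 2) * besselJ ν (2 * Real.exp s)) s := by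
  have h := ((hasDerivAt_besselJ_two_mul_exp ν s).const_mul ν).sub
    (((hasDerivAt_cexp_ofReal s).const_mul 2).mul (hasDerivAt_besselJ_two_mul_exp (ν + 1) s))
  refine h.congr_deriv ?_
  rw [besselJLogDeriv, besselJLogDeriv, add_assoc, one_add_one_eq_two]
  linear_combination 4 * Complex.exp s * besselJ_add_besselJ_add_two ν s

end BesselJ

section AtBot

lemma norm_besselJ_two_mul_exp (ν : ℂ) (s : ℝ) :
    ‖besselJ ν (2 * Real.exp s)‖
      = Real.exp (ν.re * s) * ‖besselClifford ν (-Complex.exp s ^ 2)‖ := by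
  rw [besselJ_two_mul_exp, norm_mul, Complex.norm_exp, Complex.re_mul_ofReal]

lemma tendsto_cexp_ofReal_atBot :
    Tendsto (fun s : ℝ ↦ Complex.exp s) atBot (𝓝 0) :=
  ((Complex.continuous_ofReal.tendsto' 0 0 Complex.ofReal_zero).comp
    Real.tendsto_exp_atBot).congr Complex.ofReal_exp

lemma tendsto_besselClifford_neg_cexp_sq_atBot (ν : ℂ) :
    Tendsto (fun s : ℝ ↦ besselClifford ν (-Complex.exp s ^ 2)) atBot
      (𝓝 (Complex.Gamma (ν + 1))⁻¹) := by
  have hz : Tendsto (fun s : ℝ ↦ -Complex.exp s ^ 2) atBot (𝓝 0) := by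
    simpa using (tendsto_cexp_ofReal_atBot.pow 2).neg
  rw [← besselClifford_zero_right]
  exact (hasDerivAt_besselClifford ν 0).continuousAt.tendsto.comp hz

lemma tendsto_norm_besselJ_two_mul_exp_atBot_of_re_eq_zero {ν : ℂ} (hν : ν.re = 0) :
    Tendsto (fun s ↦ ‖besselJ ν (2 * Real.exp s)‖) atBot (𝓝 ‖Complex.Gamma (ν + 1)‖⁻¹) := by
  simpa [norm_besselJ_two_mul_exp, hν] using (tendsto_besselClifford_neg_cexp_sq_atBot ν).norm

lemma tendsto_norm_besselJ_two_mul_exp_atBot_of_re_pos {ν : ℂ} (hν : 0 < ν.re) :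
    Tendsto (fun s ↦ ‖besselJ ν (2 * Real.exp s)‖) atBot (𝓝 0) := by
  have hexp : Tendsto (fun s ↦ Real.exp (ν.re * s)) atBot (𝓝 0) :=
    Real.tendsto_exp_atBot.comp (tendsto_id.const_mul_atBot hν)
  simpa [norm_besselJ_two_mul_exp] using
    hexp.mul (tendsto_besselClifford_neg_cexp_sq_atBot ν).norm

end AtBot

section ImaginaryOrder

variable {τ : ℝ}

lemma hasDerivAt_re_const_mul {F : ℝ → ℂ} {F' : ℂ} {s : ℝ} (c : ℂ) (hF : HasDerivAt F F' s) :
    HasDerivAt (fun s ↦ (c * F s).re) (c * F').re s :=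
  Complex.reCLM.hasFDerivAt.comp_hasDerivAt s (hF.const_mul c)

lemma hasDerivAt_besselJLogDeriv_I_mul (τ s : ℝ) :
    HasDerivAt (besselJLogDeriv (Complex.I * τ))
      ((-logBesselPotential τ s : ℝ) * besselJ (Complex.I * τ) (2 * Real.exp s)) s := by
  refine (hasDerivAt_besselJLogDeriv _ s).congr_deriv ?_
  have hexp : Complex.exp (2 * s) = Complex.exp s ^ 2 := by
    rw [← Complex.exp_nat_mul, Nat.cast_ofNat]
  rw [mul_pow, Complex.I_sq, logBesselPotential]
  push_cast
  rw [hexp]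
  ring

lemma hasDerivAt_re_const_mul_besselJLogDeriv (c : ℂ) (τ s : ℝ) :
    HasDerivAt (fun s ↦ (c * besselJLogDeriv (Complex.I * τ) s).re)
      (-logBesselPotential τ s * (c * besselJ (Complex.I * τ) (2 * Real.exp s)).re) s := by
  refine (hasDerivAt_re_const_mul c (hasDerivAt_besselJLogDeriv_I_mul τ s)).congr_deriv ?_
  rw [mul_left_comm, Complex.re_ofReal_mul]

lemma re_sq_add_re_sq_div_le (hτ : 0 < τ) (w h : ℂ) :
    w.re ^ 2 + (Complex.I * τ * w - h).re ^ 2 / τ ^ 2 ≤ (‖w‖ + ‖h‖ / τ) ^ 2 := by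
  have hleft : (Complex.I * τ * w - h).re = -(τ * w.im + h.re) := by
    simp [sub_eq_neg_add, add_comm]
  have hre : (w + Complex.I * (h.re / τ : ℝ)).re = w.re := by simp
  have him : (w + Complex.I * (h.re / τ : ℝ)).im = w.im + h.re / τ := by simp
  calc w.re ^ 2 + (Complex.I * τ * w - h).re ^ 2 / τ ^ 2
      = ‖w + Complex.I * (h.re / τ : ℝ)‖ ^ 2 := by
        rw [← Complex.normSq_eq_norm_sq, Complex.normSq_apply, hleft, hre, him]
        field_simp
    _ ≤ (‖w‖ + ‖h‖ / τ) ^ 2 := by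
        gcongr
        refine (norm_add_le _ _).trans ?_
        rw [norm_mul, Complex.norm_I, one_mul, Complex.norm_real, norm_div,
          Real.norm_of_nonneg hτ.le]
        gcongr
        exact Complex.abs_re_le_norm h

lemma soninEnergy_re_besselJ_le (hτ : 0 < τ) {c : ℂ} (hc : ‖c‖ = 1) (s : ℝ) :
    soninEnergy (fun s ↦ (c * besselJ (Complex.I * τ) (2 * Real.exp s)).re)
      (fun s ↦ (c * besselJLogDeriv (Complex.I * τ) s).re) (logBesselPotential τ) s
      ≤ (‖Complex.Gamma (Complex.I * τ + 1)‖ ^ 2)⁻¹ := by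
  set F : ℝ → ℂ := fun s ↦ besselJ (Complex.I * τ) (2 * Real.exp s)
  set H : ℝ → ℂ := fun s ↦ 2 * Complex.exp s * besselJ (Complex.I * τ + 1) (2 * Real.exp s)
  have hF : Tendsto (fun s ↦ ‖F s‖) atBot (𝓝 ‖Complex.Gamma (Complex.I * τ + 1)‖⁻¹) :=
    tendsto_norm_besselJ_two_mul_exp_atBot_of_re_eq_zero (by simp)
  have hH : Tendsto (fun s ↦ ‖H s‖) atBot (𝓝 0) := by
    have hJ : Tendsto (fun s ↦ ‖besselJ (Complex.I * τ + 1) (2 * Real.exp s)‖) atBot (𝓝 0) :=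
      tendsto_norm_besselJ_two_mul_exp_atBot_of_re_pos (by simp)
    simpa [H] using (tendsto_cexp_ofReal_atBot.norm.const_mul 2).mul hJ
  have hlim : Tendsto (fun s ↦ (‖F s‖ + ‖H s‖ / τ) ^ 2) atBot
      (𝓝 (‖Complex.Gamma (Complex.I * τ + 1)‖ ^ 2)⁻¹) := by
    simpa using (hF.add (hH.div_const τ)).pow 2
  have hanti := antitone_soninEnergy_logBesselPotential (τ := τ)
    (fun s ↦ hasDerivAt_re_const_mul c (hasDerivAt_besselJ_two_mul_exp (Complex.I * τ) s))
    (hasDerivAt_re_const_mul_besselJLogDeriv c τ)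
  refine ge_of_tendsto hlim ?_
  filter_upwards [eventually_le_atBot s] with t ht
  have hq : τ ^ 2 ≤ logBesselPotential τ t := le_add_of_nonneg_right (by positivity)
  have hG : c * besselJLogDeriv (Complex.I * τ) t = Complex.I * τ * (c * F t) - c * H t := by
    simp only [besselJLogDeriv, F, H]
    ring
  calc _ ≤ _ := hanti ht
    _ ≤ (c * F t).re ^ 2 + (Complex.I * τ * (c * F t) - c * H t).re ^ 2 / τ ^ 2 := by
      rw [soninEnergy, hG]
      gcongr
    _ ≤ (‖c * F t‖ + ‖c * H t‖ / τ) ^ 2 := re_sq_add_re_sq_div_le hτ _ _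
    _ = (‖F t‖ + ‖H t‖ / τ) ^ 2 := by rw [norm_mul, norm_mul, hc, one_mul, one_mul]

lemma exp_half_mul_norm_besselJ_sq_le (hτ : 1 / 2 ≤ τ) (s : ℝ) :
    Real.exp (s / 2) * ‖besselJ (Complex.I * τ) (2 * Real.exp s)‖ ^ 2
      ≤ 21 / 20 * √τ * (‖Complex.Gamma (Complex.I * τ + 1)‖ ^ 2)⁻¹ := by
  obtain ⟨c, hc, hcJ⟩ :=
    Complex.exists_norm_eq_mul_self (besselJ (Complex.I * τ) (2 * Real.exp s))
  have hre : ‖besselJ (Complex.I * τ) (2 * Real.exp s)‖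
      = (c * besselJ (Complex.I * τ) (2 * Real.exp s)).re := by
    rw [← hcJ, Complex.ofReal_re]
  rw [hre]
  exact exp_half_mul_sq_le hτ
    (fun s ↦ hasDerivAt_re_const_mul c (hasDerivAt_besselJ_two_mul_exp (Complex.I * τ) s))
    (hasDerivAt_re_const_mul_besselJLogDeriv c τ)
    (soninEnergy_re_besselJ_le (by linarith) hc) s

lemma norm_Gamma_I_mul_add_one_sq (hτ : τ ≠ 0) :
    ‖Complex.Gamma (Complex.I * τ + 1)‖ ^ 2 = Real.pi * τ / Real.sinh (Real.pi * τ) := by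
  have hIτ : Complex.I * (τ : ℂ) ≠ 0 := by simp [hτ]
  have hconj : 1 - Complex.I * (τ : ℂ) = (starRingEnd ℂ) (Complex.I * τ + 1) := by
    rw [map_add, map_mul, Complex.conj_I, Complex.conj_ofReal, map_one]
    ring
  have hsin : Complex.sin (Real.pi * (Complex.I * τ))
      = Complex.sinh (Real.pi * τ) * Complex.I := by
    rw [← Complex.sin_mul_I]
    ring_nf
  have hreflection := Complex.Gamma_mul_Gamma_one_sub (Complex.I * τ)
  rw [hconj, Complex.Gamma_conj, hsin] at hreflection
  have hI := Complex.I_ne_zero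
  have hcomplex : (‖Complex.Gamma (Complex.I * τ + 1)‖ : ℂ) ^ 2
      = Real.pi * τ / Complex.sinh (Real.pi * τ) := by
    rw [← Complex.mul_conj', Complex.Gamma_add_one _ hIτ, mul_assoc,
      ← Complex.Gamma_add_one _ hIτ, hreflection]
    field_simp
  exact_mod_cast hcomplex

theorem norm_besselJ_sq_div_cosh_le (hτ : 1 / 2 ≤ τ) {x : ℝ} (hx : 0 < x) :
    ‖besselJ (Complex.I * τ) x‖ ^ 2 / Real.cosh (Real.pi * τ) ≤ 21 / (10 * Real.pi * √x) := by
  have hτ0 : 0 < τ := by linarith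
  have hcosh := Real.cosh_pos (Real.pi * τ)
  have hexp : Real.exp (Real.log (x / 2)) = x / 2 := Real.exp_log (by positivity)
  have hbound := exp_half_mul_norm_besselJ_sq_le hτ (Real.log (x / 2))
  rw [Real.exp_half, hexp, mul_div_cancel₀ x two_ne_zero, norm_Gamma_I_mul_add_one_sq hτ0.ne',
    inv_div, Real.sqrt_div hx.le] at hbound
  have hsqrt : √2 * √τ ≤ 2 * τ := by
    rw [← Real.sqrt_mul zero_le_two, Real.sqrt_le_left (by positivity)]
    nlinarith
  rw [div_le_div_iff₀ hcosh (by positivity)]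
  calc ‖besselJ (Complex.I * τ) x‖ ^ 2 * (10 * Real.pi * √x)
      = 10 * Real.pi * √2 * (√x / √2 * ‖besselJ (Complex.I * τ) x‖ ^ 2) := by field_simp
    _ ≤ 10 * Real.pi * √2 * (21 / 20 * √τ * (Real.sinh (Real.pi * τ) / (Real.pi * τ))) := by
      gcongr
    _ = 21 / 2 * (√2 * √τ) * Real.sinh (Real.pi * τ) / τ := by
      field_simp
      norm_num
    _ ≤ 21 / 2 * (2 * τ) * Real.cosh (Real.pi * τ) / τ := by
      gcongr
      exact (Real.sinh_lt_cosh _).le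
    _ = 21 * Real.cosh (Real.pi * τ) := by field_simp

end ImaginaryOrder

section Constants

lemma three_div_four_mul_sqrt_two_mul_pi_le_Gamma_one_div_four :
    3 / 4 * √2 * Real.pi ≤ Real.Gamma (1 / 4) := by
  have hreflection := Real.Gamma_mul_Gamma_one_sub (1 / 4)
  rw [mul_one_div, Real.sin_pi_div_four] at hreflection
  norm_num1 at hreflection
  have hrec : Real.Gamma (7 / 4) = 3 / 4 * Real.Gamma (3 / 4) := by
    rw [← Real.Gamma_add_one (by norm_num)]
    norm_num
  have hconvex : Real.Gamma (7 / 4) ≤ 1 := by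
    have h := Real.convexOn_Gamma.2 (Set.mem_Ioi.2 one_pos) (Set.mem_Ioi.2 two_pos)
      (by norm_num : (0 : ℝ) ≤ 1 / 4) (by norm_num : (0 : ℝ) ≤ 3 / 4) (by norm_num)
    simp only [smul_eq_mul, Real.Gamma_one, Real.Gamma_two] at h
    norm_num1 at h
    exact h
  have hpos : 0 < Real.Gamma (1 / 4) := Real.Gamma_pos_of_pos (by norm_num)
  calc 3 / 4 * √2 * Real.pi = 3 / 4 * (Real.pi / (√2 / 2)) := by
        field_simp
        rw [Real.sq_sqrt zero_le_two]
    _ = Real.Gamma (1 / 4) * Real.Gamma (7 / 4) := by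
        rw [← hreflection, hrec]
        ring
    _ ≤ Real.Gamma (1 / 4) := mul_le_of_le_one_right hpos.le hconvex

lemma alternating_sum_le_tsum_of_antitone {a : ℕ → ℝ} (ha : Antitone a) (hsum : Summable a)
    (n : ℕ) : ∑ k ∈ Finset.range (2 * n), (-1) ^ k * a k ≤ ∑' k, (-1) ^ k * a k := by
  have hsum' : Summable fun k ↦ (-1) ^ k * a k :=
    .of_norm (hsum.norm.congr fun k ↦ by simp)
  exact ha.alternating_series_le_tendsto hsum'.hasSum.tendsto_sum_nat n

lemma two_div_nine_le_besselJ0_two : 2 / 9 ≤ besselJ0 2 := by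
  set a : ℕ → ℝ := fun k ↦ 1 / (k.factorial : ℝ) ^ 2
  have hseries : besselJ0 2 = ∑' k, (-1) ^ k * a k := by
    simp [besselJ0, a, div_eq_mul_inv]
  have hanti : Antitone a := fun m n hmn ↦ by
    simp only [a]
    gcongr
  have hsum : Summable a := by
    refine .of_nonneg_of_le (fun k ↦ by positivity) (fun k ↦ ?_)
      (Real.summable_pow_div_factorial 1)
    have hk : (1 : ℝ) ≤ k.factorial := mod_cast k.factorial_pos
    rw [one_pow]
    exact one_div_le_one_div_of_le (by positivity) (le_self_pow₀ hk two_ne_zero)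
  have := alternating_sum_le_tsum_of_antitone hanti hsum 2
  rw [hseries]
  refine le_trans ?_ this
  norm_num [a, Finset.sum_range_succ, Nat.factorial]

lemma harmonic_div_factorial_sq_succ_le (k : ℕ) :
    (harmonic (k + 2) : ℝ) / ((k + 2).factorial : ℝ) ^ 2
      ≤ 1 / 2 * (harmonic (k + 1) / ((k + 1).factorial : ℝ) ^ 2) := by
  have hharmonic : (harmonic (k + 2) : ℝ) ≤ 2 * harmonic (k + 1) := by
    have hinv : ((k + 1 + 1 : ℕ) : ℚ)⁻¹ ≤ harmonic (k + 1) := by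
      calc ((k + 1 + 1 : ℕ) : ℚ)⁻¹ ≤ ((k + 1 : ℕ) : ℚ)⁻¹ := by gcongr; simp
        _ ≤ harmonic (k + 1) := by
          rw [harmonic_succ]
          exact le_add_of_nonneg_left (Finset.sum_nonneg fun i _ ↦ by positivity)
    have h : harmonic (k + 2) ≤ 2 * harmonic (k + 1) := by
      rw [harmonic_succ (k + 1)]
      linarith
    exact_mod_cast h
  have hfactorial : 4 * ((k + 1).factorial : ℝ) ^ 2 ≤ ((k + 2).factorial : ℝ) ^ 2 := by
    rw [Nat.factorial_succ (k + 1), Nat.cast_mul, mul_pow]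
    gcongr
    push_cast
    nlinarith [(k.cast_nonneg : (0 : ℝ) ≤ k)]
  calc (harmonic (k + 2) : ℝ) / ((k + 2).factorial : ℝ) ^ 2
      ≤ 2 * harmonic (k + 1) / (4 * ((k + 1).factorial : ℝ) ^ 2) := by
        have : (0 : ℝ) < harmonic (k + 1) := mod_cast harmonic_pos k.succ_ne_zero
        gcongr
    _ = 1 / 2 * (harmonic (k + 1) / ((k + 1).factorial : ℝ) ^ 2) := by ring

lemma three_div_two_mul_pi_le_besselY0_two : 3 / (2 * Real.pi) ≤ besselY0 2 := by
  set a : ℕ → ℝ := fun k ↦ (harmonic (k + 1) : ℝ) / ((k + 1).factorial : ℝ) ^ 2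
  have ha0 (k : ℕ) : 0 ≤ a k := by
    have : (0 : ℝ) < harmonic (k + 1) := mod_cast harmonic_pos k.succ_ne_zero
    positivity
  have hratio (k : ℕ) : a (k + 1) ≤ 1 / 2 * a k := harmonic_div_factorial_sq_succ_le k
  have hanti : Antitone a := antitone_nat_of_succ_le fun k ↦ by linarith [hratio k, ha0 k]
  have hsum : Summable a := by
    refine summable_of_ratio_norm_eventually_le one_half_lt_one (.of_forall fun k ↦ ?_)
    rw [Real.norm_of_nonneg (ha0 _), Real.norm_of_nonneg (ha0 _)]
    exact hratio k
  have hseries : besselY0 2 = 2 / Real.pi *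
      (Real.eulerMascheroniConstant * besselJ0 2 + ∑' k, (-1) ^ k * a k) := by
    simp [besselY0, a, mul_div_assoc]
  have hpartial : 2 / 3 ≤ ∑' k, (-1) ^ k * a k := by
    refine le_trans ?_ (alternating_sum_le_tsum_of_antitone hanti hsum 2)
    norm_num [a, Finset.sum_range_succ, Nat.factorial, harmonic_succ]
  have hγ := Real.one_half_lt_eulerMascheroniConstant
  have hJ := two_div_nine_le_besselJ0_two
  rw [hseries, show 3 / (2 * Real.pi) = 2 / Real.pi * (3 / 4) by field_simp; norm_num]
  gcongr
  nlinarith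

lemma mul_sqrt_pi_le_Gamma_one_div_four_sq_mul_besselY0_two :
    21 / 5 * √Real.pi ≤ Real.Gamma (1 / 4) ^ 2 * (√2 * besselY0 2) := by
  have hpi := Real.pi_pos
  have hsqrt : 112 / 45 ≤ √2 * √Real.pi := by
    rw [← Real.sqrt_mul zero_le_two]
    exact Real.le_sqrt_of_sq_le (by linarith [Real.pi_gt_d2])
  calc 21 / 5 * √Real.pi = 27 / 16 * √Real.pi * (112 / 45) := by ring
    _ ≤ 27 / 16 * √Real.pi * (√2 * √Real.pi) := by gcongr
    _ = 27 / 16 * √2 * Real.pi := by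
      linear_combination 27 / 16 * √2 * Real.sq_sqrt hpi.le
    _ = (3 / 4 * √2 * Real.pi) ^ 2 * (√2 * (3 / (2 * Real.pi))) := by
      rw [mul_pow, mul_pow, Real.sq_sqrt zero_le_two]
      field_simp
      norm_num
    _ ≤ Real.Gamma (1 / 4) ^ 2 * (√2 * besselY0 2) := by
      gcongr
      · exact three_div_four_mul_sqrt_two_mul_pi_le_Gamma_one_div_four
      · exact three_div_two_mul_pi_le_besselY0_two

end Constants

theorem statement8_general {τ M x : ℝ} (hτ : 1 / 2 ≤ τ) (hM : √2 * |besselY0 2| ≤ M)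
    (hx : 0 < x) :
    ‖besselJ (Complex.I * τ) x‖ ^ 2 / Real.cosh (Real.pi * τ)
      ≤ 1 / 2 * (Real.Gamma (1 / 4) ^ 2 * M / (Real.pi * √(Real.pi * x))) := by
  have hpi := Real.pi_pos
  have hconst : 21 / 5 * √Real.pi ≤ Real.Gamma (1 / 4) ^ 2 * M := by
    refine mul_sqrt_pi_le_Gamma_one_div_four_sq_mul_besselY0_two.trans ?_
    gcongr
    exact (mul_le_mul_of_nonneg_left (le_abs_self _) (Real.sqrt_nonneg 2)).trans hM
  calc ‖besselJ (Complex.I * τ) x‖ ^ 2 / Real.cosh (Real.pi * τ)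
      ≤ 21 / (10 * Real.pi * √x) := norm_besselJ_sq_div_cosh_le hτ hx
    _ = 1 / 2 * (21 / 5 * √Real.pi / (Real.pi * √(Real.pi * x))) := by
      rw [Real.sqrt_mul hpi.le]
      field_simp
      norm_num
    _ ≤ _ := by gcongr

theorem statement8 (M : ℝ) (hM : 0 ≤ M)
    (hbound : ∀ u : ℝ, 0 < u → Real.sqrt u * |besselY0 u| ≤ M)
    (x : ℝ) (hx : 0 < x) (n : ℕ) (hn : 1 ≤ n) :
    |((besselJ (Complex.I * n / 2) x) ^ 2).re| / Real.cosh (Real.pi * n / 2)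
      ≤ (1 / 2) * (besselJ0 x ^ 2 + besselY0 x ^ 2 +
          Real.Gamma (1 / 4) ^ 2 * M / (Real.pi * Real.sqrt (Real.pi * x))) := by
  have hτ : (1 / 2 : ℝ) ≤ n / 2 := by
    gcongr
    exact mod_cast hn
  have h := statement8_general hτ (hbound 2 two_pos) hx
  rw [Complex.ofReal_div, Complex.ofReal_natCast, Complex.ofReal_ofNat, ← mul_div_assoc,
    ← mul_div_assoc] at h
  calc _ ≤ ‖besselJ (Complex.I * n / 2) x‖ ^ 2 / Real.cosh (Real.pi * n / 2) := by
        gcongr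
        exact (Complex.abs_re_le_norm _).trans_eq (norm_pow _ 2)
    _ ≤ _ := h
    _ ≤ _ := by
      gcongr
      exact le_add_of_nonneg_left (by positivity)
end
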